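/- arXiv:1407.7422 — 2 statements merged into one kernel-verified Lean document; each statement's English description precedes it below -/
import Mathlib

section
/- With the one-dimensional weighted problem defined in the context, the value η is strictly positive and the infimum defining η is attained, i.e., there exists an admissible Lipschitz function f on [−d/2, d/2] with ∫_{−d/2}^{d/2} |f|^{p−2} f g ds = 0, f ≢ 0, and ∫_{−d/2}^{d/2} |f'|^p g ds = η · ∫_{−d/2}^{d/2} |f|^p g ds. -/
open MeasureTheory Set Real

noncomputable section

/-- The weight `g(s) = ω_{N-1} (d/2 - |s|)^(N-1)`, where `ω_{N-1}` is the Lebesgue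
measure of the unit ball of `ℝ^(N-1)`. -/
def coneWeight (N : ℕ) (d : ℝ) (s : ℝ) : ℝ :=
  (volume (Metric.ball (0 : EuclideanSpace ℝ (Fin (N - 1))) 1)).toReal *
    (d / 2 - |s|) ^ (N - 1)

/-- A function is admissible for the one-dimensional weighted problem if it is
Lipschitz, not identically zero on `[-d/2, d/2]`, and satisfies the constraint
`∫ |f|^(p-2) f g = 0`. -/
def Admissible1D (N : ℕ) (p d : ℝ) (f : ℝ → ℝ) : Prop :=
  (∃ K : NNReal, LipschitzWith K f) ∧
  (∃ x ∈ Icc (-(d / 2)) (d / 2), f x ≠ 0) ∧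
  (∫ s in (-(d / 2))..(d / 2), |f s| ^ (p - 2) * f s * coneWeight N d s) = 0

/-- The value `η`: infimum of the weighted Rayleigh quotient
`(∫ |f'|^p g)/(∫ |f|^p g)` over admissible `f`, where `f'` is the a.e. derivative. -/
def eta1D (N : ℕ) (p d : ℝ) : ℝ :=
  sInf { R : ℝ | ∃ f : ℝ → ℝ, Admissible1D N p d f ∧
    R = (∫ s in (-(d / 2))..(d / 2), |deriv f s| ^ p * coneWeight N d s) /
        (∫ s in (-(d / 2))..(d / 2), |f s| ^ p * coneWeight N d s) }

end

/-!
On the half interval `[0, L]`, `L = d / 2`, the problem `-(g |w'|^(p-2) w')' = g v^(p-1)` with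
`w 0 = 0` and no flux at `L` is solved by integrating twice. The solution operator `v ↦ w` is
compact, positively homogeneous, monotone and strictly improves inequalities, so a nonlinear
Krein–Rutman argument produces a positive eigenfunction `u`, with derivative `h` and
`g h^(p-1) = lam ∫_s^L g u^(p-1)`.

Hölder's inequality with weight `h` and Tonelli's theorem turn this identity into the Hardy
inequality `lam ∫ |φ|^p g ≤ ∫ |φ'|^p g` on `[0, L]` for every Lipschitz `φ` with `φ 0 = 0`, and the
odd extension of `u` gives equality. A competitor `f` satisfies `∫ |f|^p g ≤ ∫ |f - c|^p g` for
every constant `c`, because `0` minimizes the convex function of `c` on the right precisely when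
`∫ |f|^(p-2) f g = 0`. Taking `c = f 0` and applying the Hardy inequality on both halves of
`[-L, L]` shows `η = lam`.
-/

noncomputable section

open Filter Topology

section KreinRutman

variable {E : Type*} [NormedAddCommGroup E] [Lattice E]

lemma norm_le_norm_of_nonneg_of_le [HasSolidNorm E] [IsOrderedAddMonoid E] {a b : E} (ha : 0 ≤ a)
    (hab : a ≤ b) : ‖a‖ ≤ ‖b‖ :=
  norm_le_norm_of_abs_le_abs (by rwa [abs_of_nonneg ha, abs_of_nonneg (ha.trans hab)])

variable [NormedSpace ℝ E] {T : E → E} {e : E}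

/-- Krein–Rutman type hypotheses for a (possibly nonlinear) operator on the positive cone of a
normed lattice: `T` is monotone and positively homogeneous, its values are controlled from above
by `e`, and strict inequalities are improved by `T` to inequalities with a gap of order `e`. -/
structure IsStronglyPositive (T : E → E) (e : E) : Prop where
  pos : 0 < e
  monotoneOn : MonotoneOn T (Ici 0)
  map_smul : ∀ c : ℝ, 0 ≤ c → ∀ v, 0 ≤ v → T (c • v) = c • T v
  le_norm_smul : ∀ v, 0 ≤ v → T v ≤ ‖v‖ • e
  exists_add_smul_le : ∀ a b, 0 ≤ b → b < a → ∃ ε : ℝ, 0 < ε ∧ T b + ε • e ≤ T a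

/-- The values `μ` for which `T` has a normalized subsolution `μ • v ≤ T v` in the positive cone;
the supremum of this set is the principal eigenvalue of `T`. -/
def collatzWielandtSet (T : E → E) : Set ℝ :=
  {μ | ∃ v, 0 ≤ v ∧ ‖v‖ = 1 ∧ μ • v ≤ T v}

namespace IsStronglyPositive

lemma map_zero (hT : IsStronglyPositive T e) : T 0 = 0 := by
  simpa only [zero_smul] using hT.map_smul 0 le_rfl 0 le_rfl

lemma map_nonneg (hT : IsStronglyPositive T e) {v : E} (hv : 0 ≤ v) : 0 ≤ T v :=
  hT.map_zero.symm.trans_le (hT.monotoneOn self_mem_Ici hv hv)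

variable [PosSMulMono ℝ E]

lemma mem_collatzWielandtSet (hT : IsStronglyPositive T e) {v : E} (hv : 0 < v) {μ : ℝ}
    (h : μ • v ≤ T v) : μ ∈ collatzWielandtSet T := by
  have hinv : 0 ≤ ‖v‖⁻¹ := inv_nonneg.2 (norm_nonneg v)
  refine ⟨‖v‖⁻¹ • v, smul_nonneg hinv hv.le, by
    rw [norm_smul_of_nonneg hinv, inv_mul_cancel₀ (norm_ne_zero_iff.2 hv.ne')], ?_⟩
  rw [hT.map_smul _ hinv v hv.le, smul_comm]
  exact smul_le_smul_of_nonneg_left h hinv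

lemma exists_pos_mem_collatzWielandtSet (hT : IsStronglyPositive T e) :
    ∃ μ ∈ collatzWielandtSet T, 0 < μ := by
  obtain ⟨ε, hε, h⟩ := hT.exists_add_smul_le e 0 le_rfl hT.pos
  rw [hT.map_zero, zero_add] at h
  exact ⟨ε, hT.mem_collatzWielandtSet hT.pos h, hε⟩

variable [HasSolidNorm E] [IsOrderedAddMonoid E]

lemma le_norm_of_mem_collatzWielandtSet (hT : IsStronglyPositive T e) {μ : ℝ}
    (hμ : μ ∈ collatzWielandtSet T) : μ ≤ ‖e‖ := by
  obtain ⟨v, hv, hnorm, hsub⟩ := hμ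
  rcases le_total μ 0 with hμ | hμ
  · exact hμ.trans (norm_nonneg e)
  · calc μ = ‖μ • v‖ := by rw [norm_smul_of_nonneg hμ, hnorm, mul_one]
      _ ≤ ‖e‖ := norm_le_norm_of_nonneg_of_le (smul_nonneg hμ hv)
          (hsub.trans (by simpa only [hnorm, one_smul] using hT.le_norm_smul v hv))

lemma bddAbove_collatzWielandtSet (hT : IsStronglyPositive T e) :
    BddAbove (collatzWielandtSet T) :=
  ⟨‖e‖, fun _ => hT.le_norm_of_mem_collatzWielandtSet⟩

lemma sSup_collatzWielandtSet_pos (hT : IsStronglyPositive T e) :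
    0 < sSup (collatzWielandtSet T) := by
  obtain ⟨μ, hμ, hpos⟩ := hT.exists_pos_mem_collatzWielandtSet
  exact hpos.trans_le (le_csSup hT.bddAbove_collatzWielandtSet hμ)

lemma exists_sSup_smul_le (hT : IsStronglyPositive T e) (hcont : ContinuousOn T (Ici 0))
    (hcomp : IsCompact (closure (T '' (Ici 0 ∩ Metric.closedBall 0 1)))) :
    ∃ y, 0 < y ∧ sSup (collatzWielandtSet T) • y ≤ T y := by
  obtain ⟨μ₀, hμ₀, -⟩ := hT.exists_pos_mem_collatzWielandtSet
  obtain ⟨μ, -, hμlim, hμ⟩ := exists_seq_tendsto_sSup ⟨μ₀, hμ₀⟩ hT.bddAbove_collatzWielandtSet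
  choose v hv hnorm hsub using hμ
  obtain ⟨y, -, ψ, hψ, hylim⟩ := hcomp.tendsto_subseq (x := fun k => T (v k)) fun k =>
    subset_closure (mem_image_of_mem T ⟨hv k, by simp [hnorm k]⟩)
  have hμψ : Tendsto (fun k => μ (ψ k)) atTop _ := hμlim.comp hψ.tendsto_atTop
  have hμψ_pos := hμψ.eventually (lt_mem_nhds hT.sSup_collatzWielandtSet_pos)
  have hTv (k : ℕ) : 0 ≤ T (v k) := hT.map_nonneg (hv k)
  have hy : 0 ≤ y := ge_of_tendsto' hylim fun k => hTv (ψ k)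
  have hnorm_y : sSup (collatzWielandtSet T) ≤ ‖y‖ := by
    refine le_of_tendsto_of_tendsto hμψ hylim.norm (hμψ_pos.mono fun k hk => ?_)
    calc μ (ψ k) = ‖μ (ψ k) • v (ψ k)‖ := by rw [norm_smul_of_nonneg hk.le, hnorm, mul_one]
      _ ≤ ‖T (v (ψ k))‖ := norm_le_norm_of_nonneg_of_le (smul_nonneg hk.le (hv _)) (hsub _)
  have hTTv : Tendsto (fun k => T (T (v (ψ k)))) atTop (𝓝 (T y)) :=
    (hcont y hy).tendsto.comp
      (tendsto_nhdsWithin_iff.2 ⟨hylim, Eventually.of_forall fun k => hTv (ψ k)⟩)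
  refine ⟨y, hy.lt_of_ne' (norm_pos_iff.1 (hT.sSup_collatzWielandtSet_pos.trans_le hnorm_y)),
    le_of_tendsto_of_tendsto (hμψ.smul hylim) hTTv (hμψ_pos.mono fun k hk => ?_)⟩
  calc μ (ψ k) • T (v (ψ k)) = T (μ (ψ k) • v (ψ k)) := (hT.map_smul _ hk.le _ (hv _)).symm
    _ ≤ T (T (v (ψ k))) := hT.monotoneOn (smul_nonneg hk.le (hv _)) (hTv _) (hsub _)

-- If `μ • y ≠ T y`, the gap of order `e` shows that `T y` is a subsolution for a larger `μ`.
lemma eq_sSup_smul_of_sSup_smul_le (hT : IsStronglyPositive T e) {y : E} (hy : 0 < y)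
    (h : sSup (collatzWielandtSet T) • y ≤ T y) : T y = sSup (collatzWielandtSet T) • y := by
  set μ := sSup (collatzWielandtSet T)
  have hμ : 0 < μ := hT.sSup_collatzWielandtSet_pos
  have hμy : 0 < μ • y := (smul_nonneg hμ.le hy.le).lt_of_ne' (smul_ne_zero hμ.ne' hy.ne')
  have hnorm : 0 < ‖y‖ := norm_pos_iff.2 hy.ne'
  by_contra hne
  obtain ⟨ε, hε, hgap⟩ := hT.exists_add_smul_le (T y) (μ • y) hμy.le (h.lt_of_ne' hne)
  have hmem : μ + ε / ‖y‖ ∈ collatzWielandtSet T := by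
    refine hT.mem_collatzWielandtSet (hμy.trans_le h) ?_
    calc (μ + ε / ‖y‖) • T y = μ • T y + (ε / ‖y‖) • T y := add_smul _ _ _
      _ ≤ μ • T y + (ε / ‖y‖) • (‖y‖ • e) := by
          gcongr
          exact hT.le_norm_smul y hy.le
      _ = T (μ • y) + ε • e := by
          rw [hT.map_smul μ hμ.le y hy.le, smul_smul, div_mul_cancel₀ _ hnorm.ne']
      _ ≤ T (T y) := hgap
  have : μ + ε / ‖y‖ ≤ μ := le_csSup hT.bddAbove_collatzWielandtSet hmem
  linarith [div_pos hε hnorm]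

theorem exists_pos_eigenvector (hT : IsStronglyPositive T e) (hcont : ContinuousOn T (Ici 0))
    (hcomp : IsCompact (closure (T '' (Ici 0 ∩ Metric.closedBall 0 1)))) :
    ∃ μ : ℝ, 0 < μ ∧ ∃ y, 0 < y ∧ T y = μ • y := by
  obtain ⟨y, hy, hsub⟩ := hT.exists_sSup_smul_le hcont hcomp
  exact ⟨_, hT.sSup_collatzWielandtSet_pos, y, hy, hT.eq_sSup_smul_of_sSup_smul_le hy hsub⟩

end IsStronglyPositive

end KreinRutman

section HalfInterval

lemma exists_pos_mul_le_integral {φ : ℝ → ℝ} {L : ℝ} (hφ : Continuous φ) (hφ₀ : 0 < φ 0)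
    (hnonneg : ∀ r ∈ Icc 0 L, 0 ≤ φ r) :
    ∃ ε : ℝ, 0 < ε ∧ ∀ x ∈ Icc 0 L, ε * x ≤ ∫ r in (0 : ℝ)..x, φ r := by
  let average (x : ℝ) : ℝ := ∫ t in (0 : ℝ)..1, φ (x * t)
  have haverage : Continuous average :=
    intervalIntegral.continuous_parametric_intervalIntegral_of_continuous'
      (f := fun x t => φ (x * t)) (by fun_prop) 0 1
  have hmem {x : ℝ} (hx : x ∈ Icc 0 L) {t : ℝ} (ht : t ∈ Ioc (0 : ℝ) 1) : x * t ∈ Icc 0 L :=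
    ⟨mul_nonneg hx.1 ht.1.le, (mul_le_of_le_one_right hx.1 ht.2).trans hx.2⟩
  have hpos (x : ℝ) (hx : x ∈ Icc 0 L) : 0 < average x :=
    intervalIntegral.integral_pos one_pos (hφ.comp (continuous_const_mul x)).continuousOn
      (fun t ht => hnonneg _ (hmem hx ht)) ⟨0, by simp, by rwa [mul_zero]⟩
  obtain ⟨ε, hε, hle⟩ := isCompact_Icc.exists_forall_le' haverage.continuousOn hpos
  refine ⟨ε, hε, fun x hx => ?_⟩
  calc ε * x ≤ x * average x := by
        rw [mul_comm]
        exact mul_le_mul_of_nonneg_left (hle x hx) hx.1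
    _ = ∫ r in (0 : ℝ)..x, φ r := by
        rw [intervalIntegral.mul_integral_comp_mul_left, mul_zero, mul_one]

lemma isCompact_closure_of_lipschitzWith {α β : Type*} [PseudoMetricSpace α] [CompactSpace α]
    [NormedAddCommGroup β] [ProperSpace β] {A : Set C(α, β)} {K : NNReal} {C : ℝ}
    (hlip : ∀ f ∈ A, LipschitzWith K f) (hbound : ∀ f ∈ A, ∀ x, ‖f x‖ ≤ C) :
    IsCompact (closure A) := by
  let Φ := (ContinuousMap.isometryEquivBoundedOfCompact α β).toHomeomorph
  suffices h : IsCompact (closure (Φ '' A)) by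
    rwa [← Φ.image_closure, Φ.isCompact_image] at h
  have hequi : Equicontinuous ((↑) : Φ '' A → α → β) := by
    refine (LipschitzWith.uniformEquicontinuous _ K ?_).equicontinuous
    rintro ⟨-, f, hf, rfl⟩
    exact hlip f hf
  refine BoundedContinuousFunction.arzela_ascoli _ (isCompact_closedBall 0 C) _ ?_ hequi
  rintro - x ⟨f, hf, rfl⟩
  exact mem_closedBall_zero_iff.2 (hbound f hf x)

instance hasSolidNorm_continuousMap {α : Type*} [TopologicalSpace α] [CompactSpace α] :
    HasSolidNorm C(α, ℝ) where
  solid f g hfg := (ContinuousMap.norm_le f (norm_nonneg g)).2 fun x =>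
    (hfg x).trans (g.norm_coe_le_norm x)

/-- The weights to which the existence argument applies, on the right half `[0, L]` of a symmetric
interval: continuous, nonincreasing, and vanishing at most at the end point `L`. -/
structure IsDecreasingWeight (g : ℝ → ℝ) (L : ℝ) : Prop where
  length_pos : 0 < L
  continuous : Continuous g
  antitoneOn : AntitoneOn g (Icc 0 L)
  pos_of_mem : ∀ s ∈ Ico 0 L, 0 < g s

/-- The flux `g |w'|^(p-2) w'` at `r` of the solution `w` of `-(g |w'|^(p-2) w')' = g u^(p-1)` with
no flux at `L`. -/
def flux (g : ℝ → ℝ) (p L : ℝ) (u : ℝ → ℝ) (r : ℝ) : ℝ :=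
  ∫ s in r..L, g s * u s ^ (p - 1)

/-- The derivative at `r` of the solution `w` of `-(g |w'|^(p-2) w')' = g u^(p-1)` with no flux at
`L`, for `0 ≤ u`. If `g L = 0` then `0 / 0 = 0` gives it the value `0` at `L`. -/
def fluxSlope (g : ℝ → ℝ) (p L : ℝ) (u : ℝ → ℝ) (r : ℝ) : ℝ :=
  (flux g p L u r / g r) ^ (p - 1)⁻¹

variable {g : ℝ → ℝ} {p L : ℝ} {u w : ℝ → ℝ}

lemma intervalIntegrable_weight_mul_rpow (hg : Continuous g) (hp : 1 ≤ p)
    (hu : ContinuousOn u (Icc 0 L)) {a b : ℝ} (ha : a ∈ Icc 0 L) (hb : b ∈ Icc 0 L) :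
    IntervalIntegrable (fun s => g s * u s ^ (p - 1)) volume a b :=
  ((hg.continuousOn.mul (hu.rpow_const fun _ _ => .inr (sub_nonneg.2 hp))).mono
    (uIcc_subset_Icc ha hb)).intervalIntegrable

lemma exists_mem_Ico_lt (hL : 0 < L) (hu : ContinuousOn u (Icc 0 L))
    (hw : ContinuousOn w (Icc 0 L)) (hlt : ∃ s ∈ Icc 0 L, u s < w s) :
    ∃ s ∈ Ico 0 L, u s < w s := by
  contrapose! hlt
  rw [← closure_Ico hL.ne] at hu hw ⊢
  exact le_on_closure hlt hw hu

lemma flux_const_mul (hu : ∀ s ∈ Icc 0 L, 0 ≤ u s) {c : ℝ} (hc : 0 ≤ c) {r : ℝ}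
    (hr : r ∈ Icc 0 L) : flux g p L (fun s => c * u s) r = c ^ (p - 1) * flux g p L u r := by
  rw [flux, flux, ← intervalIntegral.integral_const_mul]
  refine intervalIntegral.integral_congr fun s hs => ?_
  rw [uIcc_of_le hr.2] at hs
  simp only [mul_rpow hc (hu s ⟨hr.1.trans hs.1, hs.2⟩), mul_left_comm]

namespace IsDecreasingWeight

lemma nonneg (hg : IsDecreasingWeight g L) {s : ℝ} (hs : s ∈ Icc 0 L) : 0 ≤ g s := by
  rw [← closure_Ico hg.length_pos.ne] at hs
  exact le_on_closure (fun x hx => (hg.pos_of_mem x hx).le) continuousOn_const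
    hg.continuous.continuousOn hs

lemma flux_nonneg (hg : IsDecreasingWeight g L) (hu : ∀ s ∈ Icc 0 L, 0 ≤ u s) {r : ℝ}
    (hr : r ∈ Icc 0 L) : 0 ≤ flux g p L u r :=
  intervalIntegral.integral_nonneg hr.2 fun s hs =>
    have hs' : s ∈ Icc 0 L := ⟨hr.1.trans hs.1, hs.2⟩
    mul_nonneg (hg.nonneg hs') (rpow_nonneg (hu s hs') _)

lemma flux_mono (hg : IsDecreasingWeight g L) (hp : 1 ≤ p) (hu : ContinuousOn u (Icc 0 L))
    (hw : ContinuousOn w (Icc 0 L)) (hu₀ : ∀ s ∈ Icc 0 L, 0 ≤ u s)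
    (huw : ∀ s ∈ Icc 0 L, u s ≤ w s) {r : ℝ} (hr : r ∈ Icc 0 L) :
    flux g p L u r ≤ flux g p L w r := by
  have hL : L ∈ Icc 0 L := right_mem_Icc.2 hg.length_pos.le
  refine intervalIntegral.integral_mono_on hr.2
    (intervalIntegrable_weight_mul_rpow hg.continuous hp hu hr hL)
    (intervalIntegrable_weight_mul_rpow hg.continuous hp hw hr hL) fun s hs => ?_
  have hs' : s ∈ Icc 0 L := ⟨hr.1.trans hs.1, hs.2⟩
  exact mul_le_mul_of_nonneg_left (rpow_le_rpow (hu₀ s hs') (huw s hs') (sub_nonneg.2 hp))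
    (hg.nonneg hs')

lemma flux_zero_lt (hg : IsDecreasingWeight g L) (hp : 1 < p) (hu : ContinuousOn u (Icc 0 L))
    (hw : ContinuousOn w (Icc 0 L)) (hu₀ : ∀ s ∈ Icc 0 L, 0 ≤ u s)
    (huw : ∀ s ∈ Icc 0 L, u s ≤ w s) (hlt : ∃ s ∈ Icc 0 L, u s < w s) :
    flux g p L u 0 < flux g p L w 0 := by
  have hp₀ : 0 < p - 1 := sub_pos.2 hp
  have hcont {v : ℝ → ℝ} (hv : ContinuousOn v (Icc 0 L)) :
      ContinuousOn (fun s => g s * v s ^ (p - 1)) (Icc 0 L) :=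
    hg.continuous.continuousOn.mul (hv.rpow_const fun _ _ => .inr hp₀.le)
  obtain ⟨c, hc, hclt⟩ := exists_mem_Ico_lt hg.length_pos hu hw hlt
  refine intervalIntegral.integral_lt_integral_of_continuousOn_of_le_of_exists_lt hg.length_pos
    (hcont hu) (hcont hw) (fun s hs => ?_) ⟨c, Ico_subset_Icc_self hc, ?_⟩
  · have hs' := Ioc_subset_Icc_self hs
    exact mul_le_mul_of_nonneg_left (rpow_le_rpow (hu₀ s hs') (huw s hs') hp₀.le) (hg.nonneg hs')
  · exact mul_lt_mul_of_pos_left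
      (rpow_lt_rpow (hu₀ c (Ico_subset_Icc_self hc)) hclt hp₀) (hg.pos_of_mem c hc)

lemma abs_flux_le (hg : IsDecreasingWeight g L) (hp : 1 ≤ p) {M : ℝ}
    (hu : ∀ s ∈ Icc 0 L, |u s| ≤ M) {r : ℝ} (hr : r ∈ Icc 0 L) :
    |flux g p L u r| ≤ M ^ (p - 1) * (L - r) * g r := by
  have hbound (s : ℝ) (hs : s ∈ uIoc r L) : ‖g s * u s ^ (p - 1)‖ ≤ g r * M ^ (p - 1) := by
    rw [uIoc_of_le hr.2] at hs
    have hs' : s ∈ Icc 0 L := ⟨hr.1.trans hs.1.le, hs.2⟩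
    rw [norm_mul, norm_of_nonneg (hg.nonneg hs')]
    exact mul_le_mul (hg.antitoneOn hr hs' hs.1.le)
      ((abs_rpow_le_abs_rpow _ _).trans
        (rpow_le_rpow (abs_nonneg _) (hu s hs') (sub_nonneg.2 hp)))
      (norm_nonneg _) (hg.nonneg hr)
  calc |flux g p L u r| ≤ g r * M ^ (p - 1) * |L - r| :=
        intervalIntegral.norm_integral_le_of_norm_le_const hbound
    _ = M ^ (p - 1) * (L - r) * g r := by
        rw [abs_of_nonneg (sub_nonneg.2 hr.2)]
        ring

lemma abs_fluxSlope_le (hg : IsDecreasingWeight g L) (hp : 1 < p) {M : ℝ}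
    (hu : ∀ s ∈ Icc 0 L, |u s| ≤ M) {r : ℝ} (hr : r ∈ Icc 0 L) :
    |fluxSlope g p L u r| ≤ M * (L - r) ^ (p - 1)⁻¹ := by
  have hp₀ : 0 < p - 1 := sub_pos.2 hp
  have hM : 0 ≤ M := (abs_nonneg _).trans (hu r hr)
  have hLr : 0 ≤ L - r := sub_nonneg.2 hr.2
  have hquot : |flux g p L u r / g r| ≤ M ^ (p - 1) * (L - r) := by
    rw [abs_div, abs_of_nonneg (hg.nonneg hr)]
    exact div_le_of_le_mul₀ (hg.nonneg hr) (by positivity) (hg.abs_flux_le hp.le hu hr)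
  calc |fluxSlope g p L u r| ≤ |flux g p L u r / g r| ^ (p - 1)⁻¹ := abs_rpow_le_abs_rpow _ _
    _ ≤ (M ^ (p - 1) * (L - r)) ^ (p - 1)⁻¹ :=
        rpow_le_rpow (abs_nonneg _) hquot (inv_nonneg.2 hp₀.le)
    _ = M * (L - r) ^ (p - 1)⁻¹ := by
        rw [mul_rpow (by positivity) hLr, rpow_rpow_inv hM hp₀.ne']

lemma fluxSlope_nonneg (hg : IsDecreasingWeight g L) (hu : ∀ s ∈ Icc 0 L, 0 ≤ u s) {r : ℝ}
    (hr : r ∈ Icc 0 L) : 0 ≤ fluxSlope g p L u r :=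
  rpow_nonneg (div_nonneg (hg.flux_nonneg hu hr) (hg.nonneg hr)) _

lemma fluxSlope_mono (hg : IsDecreasingWeight g L) (hp : 1 ≤ p) (hu : ContinuousOn u (Icc 0 L))
    (hw : ContinuousOn w (Icc 0 L)) (hu₀ : ∀ s ∈ Icc 0 L, 0 ≤ u s)
    (huw : ∀ s ∈ Icc 0 L, u s ≤ w s) {r : ℝ} (hr : r ∈ Icc 0 L) :
    fluxSlope g p L u r ≤ fluxSlope g p L w r :=
  rpow_le_rpow (div_nonneg (hg.flux_nonneg hu₀ hr) (hg.nonneg hr))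
    (div_le_div_of_nonneg_right (hg.flux_mono hp hu hw hu₀ huw hr) (hg.nonneg hr))
    (inv_nonneg.2 (sub_nonneg.2 hp))

lemma fluxSlope_zero_lt (hg : IsDecreasingWeight g L) (hp : 1 < p) (hu : ContinuousOn u (Icc 0 L))
    (hw : ContinuousOn w (Icc 0 L)) (hu₀ : ∀ s ∈ Icc 0 L, 0 ≤ u s)
    (huw : ∀ s ∈ Icc 0 L, u s ≤ w s) (hlt : ∃ s ∈ Icc 0 L, u s < w s) :
    fluxSlope g p L u 0 < fluxSlope g p L w 0 :=
  have h₀ : (0 : ℝ) ∈ Icc 0 L := left_mem_Icc.2 hg.length_pos.le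
  rpow_lt_rpow (div_nonneg (hg.flux_nonneg hu₀ h₀) (hg.nonneg h₀))
    (div_lt_div_of_pos_right (hg.flux_zero_lt hp hu hw hu₀ huw hlt)
      (hg.pos_of_mem 0 (left_mem_Ico.2 hg.length_pos)))
    (inv_pos.2 (sub_pos.2 hp))

lemma fluxSlope_const_mul (hg : IsDecreasingWeight g L) (hp : 1 < p) (hu : ∀ s ∈ Icc 0 L, 0 ≤ u s)
    {c : ℝ} (hc : 0 ≤ c) {r : ℝ} (hr : r ∈ Icc 0 L) :
    fluxSlope g p L (fun s => c * u s) r = c * fluxSlope g p L u r := by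
  rw [fluxSlope, flux_const_mul hu hc hr, mul_div_assoc, mul_rpow (rpow_nonneg hc _)
    (div_nonneg (hg.flux_nonneg hu hr) (hg.nonneg hr)), rpow_rpow_inv hc (sub_pos.2 hp).ne',
    fluxSlope]

lemma weight_mul_fluxSlope_rpow (hg : IsDecreasingWeight g L) (hp : 1 < p)
    (hu : ∀ s ∈ Icc 0 L, 0 ≤ u s) {r : ℝ} (hr : r ∈ Icc 0 L) :
    g r * fluxSlope g p L u r ^ (p - 1) = flux g p L u r := by
  have hfl := hg.flux_nonneg (p := p) hu hr
  rw [fluxSlope, rpow_inv_rpow (div_nonneg hfl (hg.nonneg hr)) (sub_pos.2 hp).ne']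
  rcases hr.2.eq_or_lt with rfl | hrL
  · rw [flux, intervalIntegral.integral_same, zero_div, mul_zero]
  · exact mul_div_cancel₀ _ (hg.pos_of_mem r ⟨hr.1, hrL⟩).ne'

lemma continuous_flux_uncurry (hg : IsDecreasingWeight g L) (hp : 1 ≤ p) :
    Continuous fun q : C(Icc 0 L, ℝ) × Icc 0 L =>
      flux g p L (IccExtend hg.length_pos.le q.1) q.2 := by
  simp only [flux, intervalIntegral.integral_symm L]
  refine (intervalIntegral.continuous_parametric_intervalIntegral_of_continuous
    (f := fun (q : C(Icc 0 L, ℝ) × Icc 0 L) s =>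
      g s * IccExtend hg.length_pos.le q.1 s ^ (p - 1)) ?_
    (continuous_subtype_val.comp continuous_snd)).neg
  have heval : Continuous fun q : (C(Icc 0 L, ℝ) × Icc 0 L) × ℝ =>
      IccExtend hg.length_pos.le q.1.1 q.2 :=
    (continuous_fst.comp continuous_fst).eval (continuous_projIcc.comp continuous_snd)
  exact (hg.continuous.comp continuous_snd).mul
    (heval.rpow_const fun _ => .inr (sub_nonneg.2 hp))

lemma abs_fluxSlope_IccExtend_le (hg : IsDecreasingWeight g L) (hp : 1 < p) (v : C(Icc 0 L, ℝ))
    (r : Icc 0 L) :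
    |fluxSlope g p L (IccExtend hg.length_pos.le v) r| ≤ ‖v‖ * (L - r) ^ (p - 1)⁻¹ :=
  hg.abs_fluxSlope_le hp (fun _ _ => v.norm_coe_le_norm _) r.2

lemma continuous_fluxSlope_uncurry (hg : IsDecreasingWeight g L) (hp : 1 < p) :
    Continuous fun q : C(Icc 0 L, ℝ) × Icc 0 L =>
      fluxSlope g p L (IccExtend hg.length_pos.le q.1) q.2 := by
  have hexp : 0 < (p - 1)⁻¹ := inv_pos.2 (sub_pos.2 hp)
  refine continuous_iff_continuousAt.2 fun ⟨v, r⟩ => ?_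
  rcases r.2.2.eq_or_lt with hr | hr
  · have hbound : Tendsto (fun q : C(Icc 0 L, ℝ) × Icc 0 L => ‖q.1‖ * (L - q.2) ^ (p - 1)⁻¹)
        (𝓝 (v, r)) (𝓝 0) := by
      have hcont : Continuous fun q : C(Icc 0 L, ℝ) × Icc 0 L =>
          ‖q.1‖ * (L - q.2) ^ (p - 1)⁻¹ :=
        continuous_fst.norm.mul ((continuous_const.sub (continuous_subtype_val.comp
          continuous_snd)).rpow_const fun _ => .inr hexp.le)
      simpa only [hr, sub_self, zero_rpow hexp.ne', mul_zero] using hcont.tendsto (v, r)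
    have hzero : fluxSlope g p L (IccExtend hg.length_pos.le v) r = 0 := by
      have h := hg.abs_fluxSlope_IccExtend_le hp v r
      rwa [sub_eq_zero.2 hr.symm, zero_rpow hexp.ne', mul_zero, abs_nonpos_iff] at h
    rw [ContinuousAt, hzero]
    exact squeeze_zero_norm (fun q => hg.abs_fluxSlope_IccExtend_le hp q.1 q.2) hbound
  · have hweight : Continuous fun q : C(Icc 0 L, ℝ) × Icc 0 L => g q.2 :=
      hg.continuous.comp (continuous_subtype_val.comp continuous_snd)
    exact ((hg.continuous_flux_uncurry hp.le).continuousAt.div hweight.continuousAt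
      (hg.pos_of_mem r ⟨r.2.1, hr⟩).ne').rpow_const (.inr hexp.le)

/-- The derivative on `[0, L]`, extended to the line by its end values, of the solution of
`-(g |w'|^(p-2) w')' = g v^(p-1)` with no flux at `L`. -/
def derivSolution (hg : IsDecreasingWeight g L) (p : ℝ) (v : C(Icc 0 L, ℝ)) (r : ℝ) : ℝ :=
  fluxSlope g p L (IccExtend hg.length_pos.le v) (projIcc 0 L hg.length_pos.le r)

lemma continuous_derivSolution_uncurry (hg : IsDecreasingWeight g L) (hp : 1 < p) :
    Continuous fun q : C(Icc 0 L, ℝ) × ℝ => hg.derivSolution p q.1 q.2 := by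
  have hproj : Continuous fun q : C(Icc 0 L, ℝ) × ℝ =>
      (q.1, projIcc 0 L hg.length_pos.le q.2) :=
    continuous_fst.prodMk (continuous_projIcc.comp continuous_snd)
  exact ((hg.continuous_fluxSlope_uncurry hp).comp hproj :)

lemma continuous_derivSolution (hg : IsDecreasingWeight g L) (hp : 1 < p) (v : C(Icc 0 L, ℝ)) :
    Continuous (hg.derivSolution p v) := by
  have hpair : Continuous fun r : ℝ => (v, r) := Continuous.prodMk_right v
  exact ((hg.continuous_derivSolution_uncurry hp).comp hpair :)

lemma derivSolution_nonneg (hg : IsDecreasingWeight g L) {v : C(Icc 0 L, ℝ)} (hv : 0 ≤ v)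
    (r : ℝ) : 0 ≤ hg.derivSolution p v r :=
  hg.fluxSlope_nonneg (fun _ _ => hv _) (projIcc 0 L hg.length_pos.le r).2

lemma derivSolution_mono (hg : IsDecreasingWeight g L) (hp : 1 ≤ p) {v w : C(Icc 0 L, ℝ)}
    (hv : 0 ≤ v) (hvw : v ≤ w) (r : ℝ) : hg.derivSolution p v r ≤ hg.derivSolution p w r :=
  hg.fluxSlope_mono hp v.continuous.Icc_extend'.continuousOn w.continuous.Icc_extend'.continuousOn
    (fun _ _ => hv _) (fun _ _ => hvw _) (projIcc 0 L hg.length_pos.le r).2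

lemma derivSolution_zero_lt (hg : IsDecreasingWeight g L) (hp : 1 < p) {v w : C(Icc 0 L, ℝ)}
    (hv : 0 ≤ v) (hvw : v < w) : hg.derivSolution p v 0 < hg.derivSolution p w 0 := by
  obtain ⟨hle, x, hx⟩ := ContinuousMap.lt_def.1 hvw
  rw [derivSolution, derivSolution, projIcc_left]
  refine hg.fluxSlope_zero_lt hp v.continuous.Icc_extend'.continuousOn
    w.continuous.Icc_extend'.continuousOn (fun _ _ => hv _) (fun _ _ => hle _) ⟨x, x.2, ?_⟩
  rwa [IccExtend_val, IccExtend_val]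

lemma derivSolution_smul (hg : IsDecreasingWeight g L) (hp : 1 < p) {v : C(Icc 0 L, ℝ)}
    (hv : 0 ≤ v) {c : ℝ} (hc : 0 ≤ c) (r : ℝ) :
    hg.derivSolution p (c • v) r = c * hg.derivSolution p v r :=
  hg.fluxSlope_const_mul hp (fun _ _ => hv _) hc (projIcc 0 L hg.length_pos.le r).2

lemma abs_derivSolution_le (hg : IsDecreasingWeight g L) (hp : 1 < p) (v : C(Icc 0 L, ℝ)) (r : ℝ) :
    |hg.derivSolution p v r| ≤ ‖v‖ * L ^ (p - 1)⁻¹ := by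
  refine (hg.abs_fluxSlope_IccExtend_le hp v _).trans ?_
  have hr := (projIcc 0 L hg.length_pos.le r).2
  exact mul_le_mul_of_nonneg_left (rpow_le_rpow (sub_nonneg.2 hr.2) (sub_le_self L hr.1)
    (inv_nonneg.2 (sub_nonneg.2 hp.le))) (norm_nonneg v)

/-- The solution operator `v ↦ w` on `[0, L]` of `-(g |w'|^(p-2) w')' = g v^(p-1)` with `w 0 = 0`
and no flux at `L`; its eigenfunctions are the odd ground states of the weighted `p`-Laplacian. -/
def solution (hg : IsDecreasingWeight g L) (hp : 1 < p) (v : C(Icc 0 L, ℝ)) : C(Icc 0 L, ℝ) where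
  toFun x := ∫ r in (0 : ℝ)..x, hg.derivSolution p v r
  continuous_toFun := (intervalIntegral.continuous_primitive
    (fun _ _ => (hg.continuous_derivSolution hp v).intervalIntegrable _ _) 0).comp
      continuous_subtype_val

lemma solution_apply (hg : IsDecreasingWeight g L) (hp : 1 < p) (v : C(Icc 0 L, ℝ))
    (x : Icc 0 L) : hg.solution hp v x = ∫ r in (0 : ℝ)..x, hg.derivSolution p v r :=
  rfl

lemma continuous_solution (hg : IsDecreasingWeight g L) (hp : 1 < p) :
    Continuous (hg.solution hp) := by
  have hproj : Continuous fun q : (C(Icc 0 L, ℝ) × Icc 0 L) × ℝ => (q.1.1, q.2) :=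
    (continuous_fst.comp continuous_fst).prodMk continuous_snd
  refine ContinuousMap.continuous_of_continuous_uncurry _ ?_
  exact intervalIntegral.continuous_parametric_intervalIntegral_of_continuous
    (f := fun (q : C(Icc 0 L, ℝ) × Icc 0 L) r => hg.derivSolution p q.1 r)
    ((hg.continuous_derivSolution_uncurry hp).comp hproj :)
    (continuous_subtype_val.comp continuous_snd)

lemma dist_solution_le (hg : IsDecreasingWeight g L) (hp : 1 < p) (v : C(Icc 0 L, ℝ))
    (x y : Icc 0 L) :
    dist (hg.solution hp v x) (hg.solution hp v y) ≤ ‖v‖ * L ^ (p - 1)⁻¹ * dist x y := by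
  have hint (a b : ℝ) : IntervalIntegrable (hg.derivSolution p v) volume a b :=
    (hg.continuous_derivSolution hp v).intervalIntegrable a b
  rw [dist_eq_norm, solution_apply, solution_apply,
    intervalIntegral.integral_interval_sub_left (hint _ _) (hint _ _)]
  exact intervalIntegral.norm_integral_le_of_norm_le_const fun r _ =>
    hg.abs_derivSolution_le hp v r

lemma isCompact_closure_solution (hg : IsDecreasingWeight g L) (hp : 1 < p) :
    IsCompact (closure (hg.solution hp '' (Ici 0 ∩ Metric.closedBall 0 1))) := by
  have hC : 0 ≤ L ^ (p - 1)⁻¹ := rpow_nonneg hg.length_pos.le _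
  have hdist (v : C(Icc 0 L, ℝ)) (hv : v ∈ Metric.closedBall 0 1) (x y : Icc 0 L) :
      dist (hg.solution hp v x) (hg.solution hp v y) ≤ L ^ (p - 1)⁻¹ * dist x y :=
    (hg.dist_solution_le hp v x y).trans <| mul_le_mul_of_nonneg_right
      (mul_le_of_le_one_left hC (mem_closedBall_zero_iff.1 hv)) dist_nonneg
  refine isCompact_closure_of_lipschitzWith (K := (L ^ (p - 1)⁻¹).toNNReal)
    (C := L ^ (p - 1)⁻¹ * L) ?_ ?_
  · rintro - ⟨v, hv, rfl⟩
    exact LipschitzWith.of_dist_le_mul fun x y => by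
      simpa only [coe_toNNReal _ hC] using hdist v hv.2 x y
  · rintro - ⟨v, hv, rfl⟩ x
    have h := hdist v hv.2 x ⟨0, left_mem_Icc.2 hg.length_pos.le⟩
    rw [dist_eq_norm, solution_apply hg hp v ⟨0, _⟩, intervalIntegral.integral_same, sub_zero,
      Subtype.dist_eq, dist_zero_right, norm_of_nonneg x.2.1] at h
    exact h.trans (mul_le_mul_of_nonneg_left x.2.2 hC)

lemma isStronglyPositive_solution (hg : IsDecreasingWeight g L) (hp : 1 < p) :
    IsStronglyPositive (hg.solution hp)
      (L ^ (p - 1)⁻¹ • ⟨Subtype.val, continuous_subtype_val⟩) where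
  pos := by
    refine ContinuousMap.lt_def.2 ⟨fun x => mul_nonneg (rpow_nonneg hg.length_pos.le _) x.2.1,
      ⟨L, right_mem_Icc.2 hg.length_pos.le⟩, ?_⟩
    exact mul_pos (rpow_pos_of_pos hg.length_pos _) hg.length_pos
  monotoneOn v hv w _ hvw x := intervalIntegral.integral_mono x.2.1
    ((hg.continuous_derivSolution hp v).intervalIntegrable _ _)
    ((hg.continuous_derivSolution hp w).intervalIntegrable _ _)
    fun r => hg.derivSolution_mono hp.le hv hvw r
  map_smul c hc v hv := by
    ext x
    simp only [solution_apply, hg.derivSolution_smul hp hv hc, ContinuousMap.smul_apply,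
      smul_eq_mul, intervalIntegral.integral_const_mul]
  le_norm_smul v _ x := by
    have h := intervalIntegral.norm_integral_le_of_norm_le_const (a := 0) (b := x.1)
      (f := hg.derivSolution p v) fun r _ => hg.abs_derivSolution_le hp v r
    rw [sub_zero, abs_of_nonneg x.2.1, mul_assoc] at h
    exact (le_abs_self _).trans h
  exists_add_smul_le w v hv hvw := by
    have hcont := hg.continuous_derivSolution hp
    obtain ⟨ε, hε, hgap⟩ := exists_pos_mul_le_integral (L := L) ((hcont w).sub (hcont v))
      (sub_pos.2 (hg.derivSolution_zero_lt hp hv hvw))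
      fun r _ => sub_nonneg.2 (hg.derivSolution_mono hp.le hv hvw.le r)
    have hC : 0 < L ^ (p - 1)⁻¹ := rpow_pos_of_pos hg.length_pos _
    refine ⟨ε / L ^ (p - 1)⁻¹, div_pos hε hC, fun x => ?_⟩
    have h := hgap x x.2
    simp only [Pi.sub_apply] at h
    rw [intervalIntegral.integral_sub ((hcont w).intervalIntegrable _ _)
      ((hcont v).intervalIntegrable _ _), ← solution_apply hg hp, ← solution_apply hg hp] at h
    change hg.solution hp v x + ε / L ^ (p - 1)⁻¹ * (L ^ (p - 1)⁻¹ * x.1) ≤ hg.solution hp w x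
    rw [← mul_assoc, div_mul_cancel₀ _ hC.ne']
    linarith

end IsDecreasingWeight

end HalfInterval

section HalfEigenfunction

open BoundedContinuousFunction

variable {g : ℝ → ℝ} {p L lam : ℝ}

/-- `h` is the derivative of a positive eigenfunction `u` on `[0, L]` of
`-(g |u'|^(p-2) u')' = lam g |u|^(p-2) u` with `u 0 = 0` and no flux at `L`, in integrated form. -/
structure IsHalfEigenfunction (g : ℝ → ℝ) (p L lam : ℝ) (h : ℝ →ᵇ ℝ) : Prop where
  pos_of_mem : ∀ r ∈ Ico 0 L, 0 < h r
  flux_eq : ∀ r ∈ Icc 0 L,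
    g r * h r ^ (p - 1) = lam * flux g p L (fun s => ∫ x in (0 : ℝ)..s, h x) r

lemma flux_pos (hg : IsDecreasingWeight g L) (hp : 1 ≤ p) {u : ℝ → ℝ}
    (hu : ContinuousOn u (Icc 0 L)) (hpos : ∀ s ∈ Ioo 0 L, 0 < u s) {r : ℝ} (hr : r ∈ Ico 0 L) :
    0 < flux g p L u r :=
  intervalIntegral.intervalIntegral_pos_of_pos_on
    (intervalIntegrable_weight_mul_rpow hg.continuous hp hu (Ico_subset_Icc_self hr)
      (right_mem_Icc.2 hg.length_pos.le))
    (fun s hs => mul_pos (hg.pos_of_mem s ⟨hr.1.trans hs.1.le, hs.2⟩)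
      (rpow_pos_of_pos (hpos s ⟨hr.1.trans_lt hs.1, hs.2⟩) _)) hr.2

lemma flux_congr {u w : ℝ → ℝ} (huw : EqOn u w (Icc 0 L)) {r : ℝ} (hr : r ∈ Icc 0 L) :
    flux g p L u r = flux g p L w r := by
  refine intervalIntegral.integral_congr fun s hs => ?_
  rw [uIcc_of_le hr.2] at hs
  simp only [huw ⟨hr.1.trans hs.1, hs.2⟩]

namespace IsDecreasingWeight

lemma solution_pos (hg : IsDecreasingWeight g L) (hp : 1 < p) {v : C(Icc 0 L, ℝ)} (hv : 0 < v)
    {x : Icc 0 L} (hx : 0 < x.1) : 0 < hg.solution hp v x :=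
  intervalIntegral.integral_pos hx (hg.continuous_derivSolution hp v).continuousOn
    (fun r _ => hg.derivSolution_nonneg hv.le r)
    ⟨0, left_mem_Icc.2 hx.le,
      (hg.derivSolution_nonneg le_rfl 0).trans_lt (hg.derivSolution_zero_lt hp le_rfl hv)⟩

lemma weight_mul_derivSolution_rpow (hg : IsDecreasingWeight g L) (hp : 1 < p)
    {v : C(Icc 0 L, ℝ)} (hv : 0 ≤ v) {r : ℝ} (hr : r ∈ Icc 0 L) :
    g r * hg.derivSolution p v r ^ (p - 1) = flux g p L (IccExtend hg.length_pos.le v) r := by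
  rw [derivSolution, projIcc_of_mem _ hr]
  exact hg.weight_mul_fluxSlope_rpow hp (fun _ _ => hv _) hr

theorem exists_isHalfEigenfunction (hg : IsDecreasingWeight g L) (hp : 1 < p) :
    ∃ lam : ℝ, 0 < lam ∧ ∃ h : ℝ →ᵇ ℝ, IsHalfEigenfunction g p L lam h := by
  obtain ⟨μ, hμ, y, hy, heigen⟩ := (hg.isStronglyPositive_solution hp).exists_pos_eigenvector
    (hg.continuous_solution hp).continuousOn (hg.isCompact_closure_solution hp)
  have hp₀ : 0 < p - 1 := sub_pos.2 hp
  have hext (s : ℝ) (hs : s ∈ Icc 0 L) : IccExtend hg.length_pos.le y s = y ⟨s, hs⟩ :=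
    IccExtend_of_mem _ _ hs
  have hprimitive (s : ℝ) (hs : s ∈ Icc 0 L) :
      ∫ x in (0 : ℝ)..s, hg.derivSolution p y x = μ * y ⟨s, hs⟩ :=
    DFunLike.congr_fun heigen ⟨s, hs⟩
  have hypos (s : ℝ) (hs : s ∈ Ioo 0 L) : 0 < IccExtend hg.length_pos.le y s := by
    have hs' := Ioo_subset_Icc_self hs
    have h := hg.solution_pos hp hy (x := ⟨s, hs'⟩) hs.1
    rw [solution_apply, hprimitive s hs'] at h
    rw [hext s hs']
    exact pos_of_mul_pos_right h hμ.le
  refine ⟨μ⁻¹ ^ (p - 1), rpow_pos_of_pos (inv_pos.2 hμ) _,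
    ofNormedAddCommGroup _ (hg.continuous_derivSolution hp y) _ (hg.abs_derivSolution_le hp y),
    fun r hr => ?_, fun r hr => ?_⟩
  · have hflux := flux_pos hg hp.le y.continuous.Icc_extend'.continuousOn hypos hr
    rw [← hg.weight_mul_derivSolution_rpow hp hy.le (Ico_subset_Icc_self hr)] at hflux
    refine (hg.derivSolution_nonneg hy.le r).lt_of_ne' fun hzero => hflux.ne' ?_
    rw [hzero, zero_rpow hp₀.ne', mul_zero]
  · have hprimitive₀ (s : ℝ) (hs : s ∈ Icc 0 L) :
        0 ≤ ∫ x in (0 : ℝ)..s, hg.derivSolution p y x :=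
      intervalIntegral.integral_nonneg hs.1 fun x _ => hg.derivSolution_nonneg hy.le x
    rw [coe_ofNormedAddCommGroup, hg.weight_mul_derivSolution_rpow hp hy.le hr,
      ← flux_const_mul hprimitive₀ (inv_nonneg.2 hμ.le) hr]
    refine flux_congr (fun s hs => ?_) hr
    rw [hext s hs, hprimitive s hs, inv_mul_cancel_left₀ hμ.ne']

end IsDecreasingWeight

end HalfEigenfunction

section Hardy

open scoped ENNReal

lemma lintegral_rpow_le_weighted {α : Type*} [MeasurableSpace α] {ν : Measure α} {D w : α → ℝ≥0∞}
    (hD : AEMeasurable D ν) (hw : AEMeasurable w ν) (hw₀ : ∀ᵐ x ∂ν, w x ≠ 0)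
    (hwtop : ∀ᵐ x ∂ν, w x ≠ ∞) {p : ℝ} (hp : 1 ≤ p) :
    (∫⁻ x, D x ∂ν) ^ p ≤ (∫⁻ x, D x ^ p * w x ^ (1 - p) ∂ν) * (∫⁻ x, w x ∂ν) ^ (p - 1) := by
  have hp₀ : 0 < p := one_pos.trans_le hp
  have hp' : 0 ≤ 1 - p⁻¹ := sub_nonneg.2 (inv_le_one_of_one_le₀ hp)
  have hsplit : ∀ᵐ x ∂ν, D x = (D x ^ p * w x ^ (1 - p)) ^ p⁻¹ * w x ^ (1 - p⁻¹) := by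
    filter_upwards [hw₀, hwtop] with x h₀ htop
    have hexp : (1 - p) * p⁻¹ + (1 - p⁻¹) = 0 := by
      field_simp
      ring
    rw [ENNReal.mul_rpow_of_nonneg _ _ (inv_nonneg.2 hp₀.le), ENNReal.rpow_rpow_inv hp₀.ne',
      ← ENNReal.rpow_mul, mul_assoc, ← ENNReal.rpow_add _ _ h₀ htop, hexp, ENNReal.rpow_zero,
      mul_one]
  calc (∫⁻ x, D x ∂ν) ^ p
      = (∫⁻ x, (D x ^ p * w x ^ (1 - p)) ^ p⁻¹ * w x ^ (1 - p⁻¹) ∂ν) ^ p := by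
        rw [lintegral_congr_ae hsplit]
    _ ≤ ((∫⁻ x, D x ^ p * w x ^ (1 - p) ∂ν) ^ p⁻¹ * (∫⁻ x, w x ∂ν) ^ (1 - p⁻¹)) ^ p := by
        gcongr
        exact ENNReal.lintegral_mul_norm_pow_le ((hD.pow_const p).mul (hw.pow_const (1 - p))) hw
          (inv_nonneg.2 hp₀.le) hp' (add_sub_cancel _ _)
    _ = (∫⁻ x, D x ^ p * w x ^ (1 - p) ∂ν) * (∫⁻ x, w x ∂ν) ^ (p - 1) := by
        rw [ENNReal.mul_rpow_of_nonneg _ _ hp₀.le, ENNReal.rpow_inv_rpow hp₀.ne',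
          ← ENNReal.rpow_mul, sub_mul, one_mul, inv_mul_cancel₀ hp₀.ne']

lemma lintegral_Ioo_mul_lintegral_Ioo_swap {c G : ℝ → ℝ≥0∞} (hc : Measurable c)
    (hG : Measurable G) (a b : ℝ) :
    ∫⁻ t in Ioo a b, c t * ∫⁻ r in Ioo a t, G r =
      ∫⁻ r in Ioo a b, G r * ∫⁻ t in Ioo r b, c t := by
  let F (t r : ℝ) : ℝ≥0∞ := {q : ℝ × ℝ | q.2 < q.1}.indicator (fun q => c q.1 * G q.2) (t, r)
  have hF : Measurable (Function.uncurry F) :=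
    ((hc.comp measurable_fst).mul (hG.comp measurable_snd)).indicator
      (measurableSet_lt measurable_snd measurable_fst)
  have hFt (t : ℝ) (ht : t ∈ Ioo a b) :
      c t * ∫⁻ r in Ioo a t, G r = ∫⁻ r in Ioo a b, F t r := by
    rw [← lintegral_const_mul _ hG]
    have : F t = (Iio t).indicator fun r => c t * G r := rfl
    rw [this, lintegral_indicator measurableSet_Iio, Measure.restrict_restrict measurableSet_Iio,
      inter_comm, Ioo_inter_Iio, min_eq_right ht.2.le]
  have hFr (r : ℝ) (hr : r ∈ Ioo a b) :
      ∫⁻ t in Ioo a b, F t r = G r * ∫⁻ t in Ioo r b, c t := by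
    rw [← lintegral_const_mul _ hc]
    have : (fun t => F t r) = (Ioi r).indicator fun t => G r * c t := by
      ext t
      simp only [F, indicator, mem_ofPred_eq, mem_Ioi, mul_comm]
    rw [this, lintegral_indicator measurableSet_Ioi, Measure.restrict_restrict measurableSet_Ioi,
      inter_comm, Ioo_inter_Ioi, max_eq_right hr.1.le]
  rw [setLIntegral_congr_fun measurableSet_Ioo hFt,
    lintegral_lintegral_swap hF.aemeasurable, setLIntegral_congr_fun measurableSet_Ioo hFr]

lemma lintegral_mul_lintegral_rpow_le {c D w : ℝ → ℝ≥0∞} (hc : Measurable c) (hD : Measurable D)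
    (hw : Measurable w) {a b : ℝ} (hw₀ : ∀ x ∈ Ioo a b, w x ≠ 0) (hwtop : ∀ x ∈ Ioo a b, w x ≠ ∞)
    {p : ℝ} (hp : 1 ≤ p) :
    ∫⁻ t in Ioo a b, c t * (∫⁻ r in Ioo a t, D r) ^ p ≤
      ∫⁻ r in Ioo a b, D r ^ p * w r ^ (1 - p) *
        ∫⁻ t in Ioo r b, c t * (∫⁻ x in Ioo a t, w x) ^ (p - 1) := by
  have hW : Measurable fun t => ∫⁻ x in Ioo a t, w x :=
    Monotone.measurable fun s t hst => lintegral_mono_set (Ioo_subset_Ioo_right hst)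
  rw [← lintegral_Ioo_mul_lintegral_Ioo_swap
    (c := fun t => c t * (∫⁻ x in Ioo a t, w x) ^ (p - 1)) (G := fun r => D r ^ p * w r ^ (1 - p))
    (hc.mul (hW.pow_const _)) ((hD.pow_const p).mul (hw.pow_const (1 - p)))]
  refine setLIntegral_mono' measurableSet_Ioo fun t ht => ?_
  have hsub : Ioo a t ⊆ Ioo a b := Ioo_subset_Ioo_right ht.2.le
  rw [mul_assoc, mul_comm ((∫⁻ x in Ioo a t, w x) ^ (p - 1))]
  gcongr
  exact lintegral_rpow_le_weighted hD.aemeasurable hw.aemeasurable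
    (ae_restrict_of_forall_mem measurableSet_Ioo fun x hx => hw₀ x (hsub hx))
    (ae_restrict_of_forall_mem measurableSet_Ioo fun x hx => hwtop x (hsub hx)) hp

end Hardy

section LowerBound

open scoped ENNReal
open BoundedContinuousFunction

variable {g φ : ℝ → ℝ} {p L lam : ℝ} {K : NNReal}

lemma intervalIntegrable_abs_rpow_mul (hg : Continuous g) (hφ : Continuous φ) (hp : 0 ≤ p)
    (a b : ℝ) : IntervalIntegrable (fun s => |φ s| ^ p * g s) volume a b :=
  ((hφ.abs.rpow_const fun _ => .inr hp).mul hg).intervalIntegrable a b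

lemma intervalIntegrable_abs_deriv_rpow_mul (hg : Continuous g) (hφ : LipschitzWith K φ)
    (hp : 0 ≤ p) (a b : ℝ) : IntervalIntegrable (fun s => |deriv φ s| ^ p * g s) volume a b := by
  rw [intervalIntegrable_iff]
  refine (hg.intervalIntegrable (μ := volume) a b).def'.bdd_mul (c := (K : ℝ) ^ p) ?_ ?_
  · exact ((measurable_deriv φ).abs.pow_const p).aestronglyMeasurable
  · refine .of_forall fun s => ?_
    rw [norm_of_nonneg (rpow_nonneg (abs_nonneg _) _)]
    exact rpow_le_rpow (abs_nonneg _) (norm_deriv_le_of_lipschitz hφ) hp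

lemma enorm_sub_le_lintegral_enorm_deriv (hφ : LipschitzWith K φ) {a t : ℝ} (hat : a ≤ t) :
    ‖φ t - φ a‖ₑ ≤ ∫⁻ r in Ioo a t, ‖deriv φ r‖ₑ := by
  rw [← hφ.lipschitzOnWith.absolutelyContinuousOnInterval.integral_deriv_eq_sub,
    intervalIntegral.integral_of_le hat, integral_Ioc_eq_integral_Ioo]
  exact enorm_integral_le_lintegral_enorm _

lemma ofReal_integral_abs_rpow_mul (hg : ∀ s ∈ Icc 0 L, 0 ≤ g s) (hL : 0 ≤ L) (hp : 0 ≤ p)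
    (hint : IntervalIntegrable (fun s => |φ s| ^ p * g s) volume 0 L) :
    ENNReal.ofReal (∫ s in (0 : ℝ)..L, |φ s| ^ p * g s) =
      ∫⁻ s in Ioo 0 L, ENNReal.ofReal (g s) * ‖φ s‖ₑ ^ p := by
  rw [intervalIntegral.integral_of_le hL, integral_Ioc_eq_integral_Ioo,
    ofReal_integral_eq_lintegral_ofReal
      ((intervalIntegrable_iff_integrableOn_Ioo_of_le hL).1 hint)]
  · refine setLIntegral_congr_fun measurableSet_Ioo fun s _ => ?_
    rw [ENNReal.ofReal_mul (rpow_nonneg (abs_nonneg _) _), mul_comm, ← enorm_abs (φ s),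
      enorm_of_nonneg (abs_nonneg _), ENNReal.ofReal_rpow_of_nonneg (abs_nonneg _) hp]
  · exact ae_restrict_of_forall_mem measurableSet_Ioo fun s hs =>
      mul_nonneg (rpow_nonneg (abs_nonneg _) _) (hg s (Ioo_subset_Icc_self hs))

namespace IsHalfEigenfunction

variable {h : ℝ →ᵇ ℝ}

lemma ofReal_primitive (hh : IsHalfEigenfunction g p L lam h) {t : ℝ} (ht : t ∈ Icc 0 L) :
    ENNReal.ofReal (∫ x in (0 : ℝ)..t, h x) = ∫⁻ x in Ioo 0 t, ENNReal.ofReal (h x) := by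
  rw [intervalIntegral.integral_of_le ht.1, integral_Ioc_eq_integral_Ioo,
    ofReal_integral_eq_lintegral_ofReal
      ((intervalIntegrable_iff_integrableOn_Ioo_of_le ht.1).1
        (h.continuous.intervalIntegrable _ _))]
  exact ae_restrict_of_forall_mem measurableSet_Ioo fun s hs =>
    (hh.pos_of_mem s ⟨hs.1.le, hs.2.trans_le ht.2⟩).le

lemma primitive_pos (hh : IsHalfEigenfunction g p L lam h) {t : ℝ} (ht : t ∈ Ioc 0 L) :
    0 < ∫ x in (0 : ℝ)..t, h x :=
  intervalIntegral.intervalIntegral_pos_of_pos_on (h.continuous.intervalIntegrable _ _)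
    (fun s hs => hh.pos_of_mem s ⟨hs.1.le, hs.2.trans_le ht.2⟩) ht.1

lemma primitive_nonneg (hh : IsHalfEigenfunction g p L lam h) {t : ℝ} (ht : t ∈ Icc 0 L) :
    0 ≤ ∫ x in (0 : ℝ)..t, h x := by
  rcases ht.1.eq_or_lt with rfl | hpos
  · exact intervalIntegral.integral_same.ge
  · exact (hh.primitive_pos ⟨hpos, ht.2⟩).le

lemma ofReal_flux (hh : IsHalfEigenfunction g p L lam h) (hg : IsDecreasingWeight g L)
    (hp : 1 ≤ p) {r : ℝ} (hr : r ∈ Icc 0 L) :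
    ENNReal.ofReal (flux g p L (fun s => ∫ x in (0 : ℝ)..s, h x) r) =
      ∫⁻ t in Ioo r L, ENNReal.ofReal (g t) *
        (∫⁻ x in Ioo 0 t, ENNReal.ofReal (h x)) ^ (p - 1) := by
  have hmem {s : ℝ} (hs : s ∈ Ioo r L) : s ∈ Icc 0 L := ⟨hr.1.trans hs.1.le, hs.2.le⟩
  rw [flux, intervalIntegral.integral_of_le hr.2, integral_Ioc_eq_integral_Ioo,
    ofReal_integral_eq_lintegral_ofReal]
  · refine setLIntegral_congr_fun measurableSet_Ioo fun t ht => ?_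
    rw [← hh.ofReal_primitive (hmem ht), ENNReal.ofReal_rpow_of_nonneg
      (hh.primitive_nonneg (hmem ht)) (sub_nonneg.2 hp), ← ENNReal.ofReal_mul (hg.nonneg (hmem ht))]
  · exact (intervalIntegrable_iff_integrableOn_Ioo_of_le hr.2).1
      (intervalIntegrable_weight_mul_rpow hg.continuous hp
        (intervalIntegral.differentiable_integral_of_continuous
          h.continuous).continuous.continuousOn hr (right_mem_Icc.2 hg.length_pos.le))
  · exact ae_restrict_of_forall_mem measurableSet_Ioo fun s hs =>
      mul_nonneg (hg.nonneg (hmem hs)) (rpow_nonneg (hh.primitive_nonneg (hmem hs)) _)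

-- Hölder with weight `h` and Tonelli turn the left side into `∫ |φ'|^p h^(1-p)` times `lam` times
-- the flux, which the eigenvalue equation identifies with `g h^(p-1)`.
theorem mul_lintegral_le (hh : IsHalfEigenfunction g p L lam h) (hg : IsDecreasingWeight g L)
    (hp : 1 ≤ p) (hlam : 0 ≤ lam) {D : ℝ → ℝ≥0∞} (hD : Measurable D) :
    ENNReal.ofReal lam * ∫⁻ t in Ioo 0 L, ENNReal.ofReal (g t) * (∫⁻ r in Ioo 0 t, D r) ^ p ≤
      ∫⁻ r in Ioo 0 L, ENNReal.ofReal (g r) * D r ^ p := by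
  have hpos (r : ℝ) (hr : r ∈ Ioo 0 L) : 0 < h r := hh.pos_of_mem r (Ioo_subset_Ico_self hr)
  refine (mul_le_mul_right (lintegral_mul_lintegral_rpow_le hg.continuous.measurable.ennreal_ofReal
    hD h.continuous.measurable.ennreal_ofReal
    (fun r hr => (ENNReal.ofReal_pos.2 (hpos r hr)).ne') (fun _ _ => ENNReal.ofReal_ne_top) hp)
    _).trans_eq ?_
  rw [← lintegral_const_mul' _ _ ENNReal.ofReal_ne_top]
  refine setLIntegral_congr_fun measurableSet_Ioo fun r hr => ?_
  have hr' := Ioo_subset_Icc_self hr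
  have hne : ENNReal.ofReal (h r) ≠ 0 := (ENNReal.ofReal_pos.2 (hpos r hr)).ne'
  calc ENNReal.ofReal lam * (D r ^ p * ENNReal.ofReal (h r) ^ (1 - p) * _)
      = D r ^ p * ENNReal.ofReal (h r) ^ (1 - p) * ENNReal.ofReal (g r * h r ^ (p - 1)) := by
        rw [← hh.ofReal_flux hg hp hr', mul_left_comm, ← ENNReal.ofReal_mul hlam, hh.flux_eq r hr']
    _ = ENNReal.ofReal (g r) * D r ^ p *
          (ENNReal.ofReal (h r) ^ (1 - p) * ENNReal.ofReal (h r) ^ (p - 1)) := by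
        rw [ENNReal.ofReal_mul (hg.nonneg hr'),
          ← ENNReal.ofReal_rpow_of_nonneg (hpos r hr).le (sub_nonneg.2 hp)]
        ring
    _ = ENNReal.ofReal (g r) * D r ^ p := by
        rw [← ENNReal.rpow_add _ _ hne ENNReal.ofReal_ne_top, sub_add_sub_cancel, sub_self,
          ENNReal.rpow_zero, mul_one]

theorem mul_integral_abs_sub_rpow_le (hh : IsHalfEigenfunction g p L lam h)
    (hg : IsDecreasingWeight g L) (hp : 1 ≤ p) (hlam : 0 ≤ lam) (hφ : LipschitzWith K φ) :
    lam * ∫ s in (0 : ℝ)..L, |φ s - φ 0| ^ p * g s ≤ ∫ s in (0 : ℝ)..L, |deriv φ s| ^ p * g s := by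
  have hp₀ : 0 ≤ p := zero_le_one.trans hp
  have hL := hg.length_pos.le
  have hnonneg : 0 ≤ ∫ s in (0 : ℝ)..L, |deriv φ s| ^ p * g s :=
    intervalIntegral.integral_nonneg hL fun s hs =>
      mul_nonneg (rpow_nonneg (abs_nonneg _) _) (hg.nonneg hs)
  rw [← ENNReal.ofReal_le_ofReal_iff hnonneg, ENNReal.ofReal_mul hlam,
    ofReal_integral_abs_rpow_mul (φ := fun s => φ s - φ 0) (fun _ => hg.nonneg) hL hp₀
      (intervalIntegrable_abs_rpow_mul hg.continuous (hφ.continuous.sub continuous_const) hp₀ 0 L),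
    ofReal_integral_abs_rpow_mul (fun _ => hg.nonneg) hL hp₀
      (intervalIntegrable_abs_deriv_rpow_mul hg.continuous hφ hp₀ 0 L)]
  refine (mul_le_mul_right (setLIntegral_mono' measurableSet_Ioo fun t ht => ?_) _).trans
    (hh.mul_lintegral_le hg hp hlam (measurable_deriv φ).enorm)
  gcongr
  exact enorm_sub_le_lintegral_enorm_deriv hφ ht.1.le

end IsHalfEigenfunction

lemma continuous_abs_rpow_sub_two_mul (hp : 1 < p) :
    Continuous fun a : ℝ => |a| ^ (p - 2) * a := by
  have hderiv : deriv (fun a : ℝ => ‖a‖ ^ p) = fun a => p * (|a| ^ (p - 2) * a) := by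
    ext a
    rw [← mul_assoc]
    exact (hasDerivAt_abs_rpow a hp).deriv
  have hcont := (contDiff_norm_rpow (E := ℝ) hp).continuous_deriv le_rfl
  rw [hderiv] at hcont
  simpa only [inv_mul_cancel_left₀ (one_pos.trans hp).ne'] using hcont.const_mul p⁻¹

lemma abs_rpow_le_abs_sub_rpow_add (hp : 1 < p) (a c : ℝ) :
    |a| ^ p ≤ |a - c| ^ p + p * c * (|a| ^ (p - 2) * a) := by
  have hp₀ : 0 < p := one_pos.trans hp
  rcases eq_or_ne a 0 with rfl | ha
  · rw [abs_zero, zero_rpow hp₀.ne', mul_zero, mul_zero, add_zero]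
    exact rpow_nonneg (abs_nonneg _) _
  have hpow : |a| ^ (p - 2) * |a| = |a| ^ (p - 1) := by
    rw [← rpow_add_one (abs_ne_zero.2 ha)]
    ring_nf
  have hsq : |a| ^ (p - 2) * a * a = |a| ^ p := by
    rw [mul_assoc, ← abs_mul_abs_self, ← mul_assoc, hpow, ← rpow_add_one (abs_ne_zero.2 ha),
      sub_add_cancel]
  have hconj := Real.HolderConjugate.conjExponent hp
  have hyoung : |a| ^ (p - 1) * |a - c| ≤ |a| ^ p * (1 - p⁻¹) + |a - c| ^ p * p⁻¹ := by
    have h := Real.young_inequality_of_nonneg (rpow_nonneg (abs_nonneg a) (p - 1))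
      (abs_nonneg (a - c)) hconj.symm
    rwa [← rpow_mul (abs_nonneg a), hconj.sub_one_mul_conj, div_eq_mul_inv, div_eq_mul_inv,
      ← hconj.one_sub_inv] at h
  have hcross : |a| ^ (p - 2) * a * (a - c) ≤ |a| ^ (p - 1) * |a - c| := by
    rw [← hpow, ← abs_of_nonneg (rpow_nonneg (abs_nonneg a) (p - 2)), ← abs_mul, ← abs_mul,
      abs_of_nonneg (rpow_nonneg (abs_nonneg a) (p - 2))]
    exact le_abs_self _
  have hscaled := mul_le_mul_of_nonneg_left (hcross.trans hyoung) hp₀.le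
  have hcancel : p * (|a| ^ p * (1 - p⁻¹) + |a - c| ^ p * p⁻¹) =
      p * |a| ^ p - |a| ^ p + |a - c| ^ p := by
    field_simp
  rw [hcancel, mul_sub, hsq] at hscaled
  linarith

lemma integral_abs_rpow_le_integral_abs_sub_rpow (hp : 1 < p) {a b : ℝ} (hab : a ≤ b)
    (hg : Continuous g) (hg₀ : ∀ s ∈ Icc a b, 0 ≤ g s) (hφ : Continuous φ)
    (hconstraint : ∫ s in a..b, |φ s| ^ (p - 2) * φ s * g s = 0) (c : ℝ) :
    ∫ s in a..b, |φ s| ^ p * g s ≤ ∫ s in a..b, |φ s - c| ^ p * g s := by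
  have hp₀ : 0 ≤ p := (one_pos.trans hp).le
  have hshift := intervalIntegrable_abs_rpow_mul (φ := fun s => φ s - c) hg
    (hφ.sub continuous_const) hp₀ a b
  have htangent : IntervalIntegrable (fun s => p * c * (|φ s| ^ (p - 2) * φ s * g s))
      volume a b :=
    (((continuous_abs_rpow_sub_two_mul hp).comp hφ).mul hg |>.const_mul
      (p * c)).intervalIntegrable a b
  calc ∫ s in a..b, |φ s| ^ p * g s
      ≤ ∫ s in a..b, (|φ s - c| ^ p * g s + p * c * (|φ s| ^ (p - 2) * φ s * g s)) := by
        refine intervalIntegral.integral_mono_on hab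
          (intervalIntegrable_abs_rpow_mul hg hφ hp₀ a b) (hshift.add htangent) fun s hs => ?_
        rw [← mul_assoc (p * c), ← add_mul]
        exact mul_le_mul_of_nonneg_right (abs_rpow_le_abs_sub_rpow_add hp _ _) (hg₀ s hs)
    _ = ∫ s in a..b, |φ s - c| ^ p * g s := by
        rw [intervalIntegral.integral_add hshift htangent, intervalIntegral.integral_const_mul,
          hconstraint, mul_zero, add_zero]

lemma integral_neg_self_eq_add {F : ℝ → ℝ} (hF : IntervalIntegrable F volume (-L) L)
    (hL : 0 ≤ L) :
    ∫ s in (-L)..L, F s = (∫ s in (0 : ℝ)..L, F s) + ∫ s in (0 : ℝ)..L, F (-s) := by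
  have hmem : (0 : ℝ) ∈ uIcc (-L) L := by
    rw [uIcc_of_le (neg_le_self hL)]
    exact ⟨neg_nonpos.2 hL, hL⟩
  rw [intervalIntegral.integral_comp_neg, neg_zero, add_comm,
    intervalIntegral.integral_add_adjacent_intervals
      (hF.mono_set (uIcc_subset_uIcc_left hmem)) (hF.mono_set (uIcc_subset_uIcc_right hmem))]

lemma apply_abs_of_even (heven : Function.Even g) (s : ℝ) : g |s| = g s := by
  rcases abs_choice s with h | h
  · rw [h]
  · rw [h, heven]

lemma IsDecreasingWeight.nonneg_of_even (hg : IsDecreasingWeight g L) (heven : Function.Even g)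
    {s : ℝ} (hs : s ∈ Icc (-L) L) : 0 ≤ g s := by
  rw [← apply_abs_of_even heven]
  exact hg.nonneg ⟨abs_nonneg s, abs_le.2 hs⟩

lemma IsDecreasingWeight.pos_of_even (hg : IsDecreasingWeight g L) (heven : Function.Even g)
    {s : ℝ} (hs : s ∈ Ioo (-L) L) : 0 < g s := by
  rw [← apply_abs_of_even heven]
  exact hg.pos_of_mem _ ⟨abs_nonneg s, abs_lt.2 hs⟩

theorem IsHalfEigenfunction.mul_integral_abs_rpow_le {h : ℝ →ᵇ ℝ}
    (hh : IsHalfEigenfunction g p L lam h) (hg : IsDecreasingWeight g L)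
    (heven : Function.Even g) (hp : 1 < p) (hlam : 0 ≤ lam) (hφ : LipschitzWith K φ)
    (hconstraint : ∫ s in (-L)..L, |φ s| ^ (p - 2) * φ s * g s = 0) :
    lam * ∫ s in (-L)..L, |φ s| ^ p * g s ≤ ∫ s in (-L)..L, |deriv φ s| ^ p * g s := by
  have hp₀ : 0 ≤ p := (one_pos.trans hp).le
  have hL := hg.length_pos.le
  have hreflect : LipschitzWith K fun s => φ (-s) := fun x y => by
    simpa only [edist_neg_neg] using hφ (-x) (-y)
  have hright := hh.mul_integral_abs_sub_rpow_le hg hp.le hlam hφ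
  have hleft := hh.mul_integral_abs_sub_rpow_le hg hp.le hlam hreflect
  simp only [deriv_comp_neg, abs_neg, neg_zero] at hleft
  calc lam * ∫ s in (-L)..L, |φ s| ^ p * g s
      ≤ lam * ∫ s in (-L)..L, |φ s - φ 0| ^ p * g s :=
        mul_le_mul_of_nonneg_left (integral_abs_rpow_le_integral_abs_sub_rpow hp
          (neg_le_self hL) hg.continuous (fun s hs => hg.nonneg_of_even heven hs) hφ.continuous
          hconstraint _) hlam
    _ = lam * (∫ s in (0 : ℝ)..L, |φ s - φ 0| ^ p * g s) +
          lam * ∫ s in (0 : ℝ)..L, |φ (-s) - φ 0| ^ p * g s := by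
        rw [← mul_add, integral_neg_self_eq_add (intervalIntegrable_abs_rpow_mul
          (φ := fun s => φ s - φ 0) hg.continuous (hφ.continuous.sub continuous_const) hp₀ _ _) hL]
        simp only [heven _]
    _ ≤ _ := add_le_add hright hleft
    _ = ∫ s in (-L)..L, |deriv φ s| ^ p * g s := by
        rw [integral_neg_self_eq_add
          (intervalIntegrable_abs_deriv_rpow_mul hg.continuous hφ hp₀ _ _) hL]
        simp only [heven _]

end LowerBound

section Minimizer

open BoundedContinuousFunction

variable {g : ℝ → ℝ} {p L lam : ℝ} {h : ℝ →ᵇ ℝ}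

lemma IsHalfEigenfunction.nonneg_of_mem (hh : IsHalfEigenfunction g p L lam h) (hL : 0 < L)
    {r : ℝ} (hr : r ∈ Icc 0 L) : 0 ≤ h r := by
  rw [← closure_Ico hL.ne] at hr
  exact le_on_closure (fun x hx => (hh.pos_of_mem x hx).le) continuousOn_const
    h.continuous.continuousOn hr

lemma hasDerivAt_flux (hg : Continuous g) (hp : 1 ≤ p) {u : ℝ → ℝ} (hu : Continuous u) (r : ℝ) :
    HasDerivAt (flux g p L u) (-(g r * u r ^ (p - 1))) r := by
  have hcont : Continuous fun s => g s * u s ^ (p - 1) :=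
    hg.mul (hu.rpow_const fun _ => .inr (sub_nonneg.2 hp))
  exact intervalIntegral.integral_hasDerivAt_left (hcont.intervalIntegrable _ _)
    (hcont.stronglyMeasurableAtFilter _ _) hcont.continuousAt

lemma integral_mul_flux {u v : ℝ → ℝ} (hg : Continuous g) (hp : 1 ≤ p)
    (hu : ∀ s, HasDerivAt u (v s) s) (hv : Continuous v) (hu₀ : u 0 = 0) :
    ∫ s in (0 : ℝ)..L, v s * flux g p L u s = ∫ s in (0 : ℝ)..L, u s * (g s * u s ^ (p - 1)) := by
  have hcont : Continuous u := continuous_iff_continuousAt.2 fun s => (hu s).continuousAt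
  have hparts := intervalIntegral.integral_mul_deriv_eq_deriv_mul (a := 0) (b := L)
    (fun s _ => hu s) (fun s _ => hasDerivAt_flux (L := L) hg hp hcont s)
    (hv.intervalIntegrable _ _) ((hg.mul (hcont.rpow_const fun _ =>
      .inr (sub_nonneg.2 hp))).neg.intervalIntegrable 0 L)
  simp only [mul_neg, intervalIntegral.integral_neg, hu₀, zero_mul, flux,
    intervalIntegral.integral_same, mul_zero, sub_zero, zero_sub, neg_inj] at hparts
  exact hparts.symm

/-- The odd function on the line whose derivative is `h` on the positive half-line. -/
def oddPrimitive (h : ℝ → ℝ) (s : ℝ) : ℝ :=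
  ∫ x in (0 : ℝ)..s, h |x|

lemma hasDerivAt_oddPrimitive {h : ℝ → ℝ} (hh : Continuous h) (s : ℝ) :
    HasDerivAt (oddPrimitive h) (h |s|) s :=
  ((hh.comp continuous_abs).integral_hasStrictDerivAt 0 s).hasDerivAt

lemma odd_oddPrimitive (h : ℝ → ℝ) : Function.Odd (oddPrimitive h) := fun s => by
  have hneg := intervalIntegral.integral_comp_neg (a := 0) (b := s) fun x => h |x|
  simp only [abs_neg, neg_zero] at hneg
  rw [oddPrimitive, oddPrimitive, hneg, intervalIntegral.integral_symm]

lemma lipschitzWith_oddPrimitive (h : ℝ →ᵇ ℝ) : LipschitzWith ‖h‖₊ (oddPrimitive h) :=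
  lipschitzWith_of_nnnorm_deriv_le
    (fun s => (hasDerivAt_oddPrimitive h.continuous s).differentiableAt) fun s => by
      rw [(hasDerivAt_oddPrimitive h.continuous s).deriv]
      exact h.nnnorm_coe_le_nnnorm _

lemma oddPrimitive_eqOn (h : ℝ → ℝ) :
    EqOn (oddPrimitive h) (fun s => ∫ x in (0 : ℝ)..s, h x) (Icc 0 L) := fun s hs => by
  refine intervalIntegral.integral_congr fun x hx => ?_
  rw [uIcc_of_le hs.1] at hx
  simp only [abs_of_nonneg hx.1]

lemma abs_rpow_eq_mul_rpow_sub_one (hp : 0 < p) {x : ℝ} (hx : 0 ≤ x) :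
    |x| ^ p = x * x ^ (p - 1) := by
  rw [abs_of_nonneg hx, mul_comm, ← rpow_add_one' hx (by rw [sub_add_cancel]; exact hp.ne'),
    sub_add_cancel]

theorem IsHalfEigenfunction.integral_abs_rpow_mul (hh : IsHalfEigenfunction g p L lam h)
    (hg : IsDecreasingWeight g L) (hp : 1 ≤ p) :
    ∫ s in (0 : ℝ)..L, |h (|s|)| ^ p * g s =
      lam * ∫ s in (0 : ℝ)..L, |oddPrimitive h s| ^ p * g s := by
  have hp₀ : 0 < p := one_pos.trans_le hp
  have hL := hg.length_pos
  calc ∫ s in (0 : ℝ)..L, |h (|s|)| ^ p * g s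
      = ∫ s in (0 : ℝ)..L, lam * (h |s| * flux g p L (oddPrimitive h) s) := by
        refine intervalIntegral.integral_congr fun s hs => ?_
        rw [uIcc_of_le hL.le] at hs
        simp only [abs_of_nonneg hs.1]
        rw [abs_rpow_eq_mul_rpow_sub_one hp₀ (hh.nonneg_of_mem hL hs), mul_assoc, mul_comm _ (g s),
          hh.flux_eq s hs, flux_congr (oddPrimitive_eqOn h) hs, mul_left_comm]
    _ = lam * ∫ s in (0 : ℝ)..L, oddPrimitive h s * (g s * oddPrimitive h s ^ (p - 1)) := by
        rw [intervalIntegral.integral_const_mul, integral_mul_flux hg.continuous hp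
          (hasDerivAt_oddPrimitive h.continuous) (h.continuous.comp continuous_abs)
          intervalIntegral.integral_same]
    _ = lam * ∫ s in (0 : ℝ)..L, |oddPrimitive h s| ^ p * g s := by
        congr 1
        refine intervalIntegral.integral_congr fun s hs => ?_
        rw [uIcc_of_le hL.le] at hs
        have hnonneg : 0 ≤ oddPrimitive h s :=
          (hh.primitive_nonneg hs).trans_eq (oddPrimitive_eqOn h hs).symm
        simp only [abs_rpow_eq_mul_rpow_sub_one hp₀ hnonneg, mul_assoc, mul_comm (g s)]

theorem IsHalfEigenfunction.integral_abs_deriv_oddPrimitive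
    (hh : IsHalfEigenfunction g p L lam h) (hg : IsDecreasingWeight g L)
    (heven : Function.Even g) (hp : 1 ≤ p) :
    ∫ s in (-L)..L, |deriv (oddPrimitive h) s| ^ p * g s =
      lam * ∫ s in (-L)..L, |oddPrimitive h s| ^ p * g s := by
  have hp₀ : 0 ≤ p := zero_le_one.trans hp
  have hlip := lipschitzWith_oddPrimitive h
  rw [integral_neg_self_eq_add (intervalIntegrable_abs_deriv_rpow_mul hg.continuous hlip hp₀ _ _)
      hg.length_pos.le,
    integral_neg_self_eq_add (intervalIntegrable_abs_rpow_mul hg.continuous hlip.continuous hp₀ _ _)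
      hg.length_pos.le]
  simp only [(hasDerivAt_oddPrimitive h.continuous _).deriv, odd_oddPrimitive h _, heven _, abs_neg,
    hh.integral_abs_rpow_mul hg hp, mul_add]

end Minimizer

section RayleighQuotient

open BoundedContinuousFunction

variable {g f : ℝ → ℝ} {p L lam : ℝ}

/-- The competitors of the weighted problem on `[-L, L]`: Lipschitz functions that do not vanish
identically there and satisfy `∫ |f|^(p-2) f g = 0`. -/
def WeightedAdmissible (g : ℝ → ℝ) (p L : ℝ) (f : ℝ → ℝ) : Prop :=
  (∃ K : NNReal, LipschitzWith K f) ∧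
  (∃ x ∈ Icc (-L) L, f x ≠ 0) ∧
  (∫ s in (-L)..L, |f s| ^ (p - 2) * f s * g s) = 0

/-- The infimum over the competitors of the Rayleigh quotient `(∫ |f'|^p g) / (∫ |f|^p g)`. -/
def weightedRayleighInf (g : ℝ → ℝ) (p L : ℝ) : ℝ :=
  sInf {R : ℝ | ∃ f : ℝ → ℝ, WeightedAdmissible g p L f ∧
    R = (∫ s in (-L)..L, |deriv f s| ^ p * g s) / ∫ s in (-L)..L, |f s| ^ p * g s}

lemma exists_mem_Ioo_ne_zero (hL : 0 < L) (hf : Continuous f) (hne : ∃ x ∈ Icc (-L) L, f x ≠ 0) :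
    ∃ x ∈ Ioo (-L) L, f x ≠ 0 := by
  contrapose! hne
  rw [← closure_Ioo (neg_lt_self hL).ne]
  exact EqOn.closure (g := fun _ => 0) hne hf continuous_const

lemma WeightedAdmissible.integral_abs_rpow_pos (hf : WeightedAdmissible g p L f)
    (hg : IsDecreasingWeight g L) (heven : Function.Even g) (hp : 0 ≤ p) :
    0 < ∫ s in (-L)..L, |f s| ^ p * g s := by
  obtain ⟨⟨K, hlip⟩, hne, -⟩ := hf
  obtain ⟨x, hx, hfx⟩ := exists_mem_Ioo_ne_zero hg.length_pos hlip.continuous hne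
  exact intervalIntegral.integral_pos (neg_lt_self hg.length_pos)
    ((hlip.continuous.abs.rpow_const fun _ => .inr hp).mul hg.continuous).continuousOn
    (fun s hs => mul_nonneg (rpow_nonneg (abs_nonneg _) _)
      (hg.nonneg_of_even heven (Ioc_subset_Icc_self hs)))
    ⟨x, Ioo_subset_Icc_self hx,
      mul_pos (rpow_pos_of_pos (abs_pos.2 hfx) _) (hg.pos_of_even heven hx)⟩

lemma integral_neg_self_eq_zero_of_odd {F : ℝ → ℝ} (hF : Function.Odd F) :
    ∫ s in (-L)..L, F s = 0 := by
  have hreflect := intervalIntegral.integral_comp_neg (a := -L) (b := L) F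
  simp only [hF _, intervalIntegral.integral_neg, neg_neg] at hreflect
  exact self_eq_neg.1 hreflect.symm

lemma IsHalfEigenfunction.weightedAdmissible_oddPrimitive {h : ℝ →ᵇ ℝ}
    (hh : IsHalfEigenfunction g p L lam h) (hL : 0 < L) (heven : Function.Even g) :
    WeightedAdmissible g p L (oddPrimitive h) := by
  refine ⟨⟨_, lipschitzWith_oddPrimitive h⟩,
    ⟨L, right_mem_Icc.2 (neg_le_self hL.le), ?_⟩, integral_neg_self_eq_zero_of_odd fun s => ?_⟩
  · rw [oddPrimitive_eqOn h (right_mem_Icc.2 hL.le)]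
    exact (hh.primitive_pos (right_mem_Ioc.2 hL)).ne'
  · rw [odd_oddPrimitive, abs_neg, heven, mul_neg, neg_mul]

theorem IsHalfEigenfunction.weightedRayleighInf_eq {h : ℝ →ᵇ ℝ}
    (hh : IsHalfEigenfunction g p L lam h) (hg : IsDecreasingWeight g L)
    (heven : Function.Even g) (hp : 1 < p) (hlam : 0 ≤ lam) :
    weightedRayleighInf g p L = lam := by
  have hp₀ : 0 ≤ p := (one_pos.trans hp).le
  have hadm := hh.weightedAdmissible_oddPrimitive hg.length_pos heven
  refine IsLeast.csInf_eq ⟨⟨oddPrimitive h, hadm, ?_⟩, ?_⟩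
  · rw [hh.integral_abs_deriv_oddPrimitive hg heven hp.le,
      mul_div_cancel_right₀ _ (hadm.integral_abs_rpow_pos hg heven hp₀).ne']
  · rintro - ⟨f, hf, rfl⟩
    have hpos := hf.integral_abs_rpow_pos hg heven hp₀
    obtain ⟨⟨K, hlip⟩, -, hconstraint⟩ := hf
    exact (le_div_iff₀ hpos).2 (hh.mul_integral_abs_rpow_le hg heven hp hlam hlip hconstraint)

theorem eta1D_pos_and_attained_general (hg : IsDecreasingWeight g L) (heven : Function.Even g)
    (hp : 1 < p) :
    0 < weightedRayleighInf g p L ∧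
    ∃ f : ℝ → ℝ, WeightedAdmissible g p L f ∧
      (∫ s in (-L)..L, |deriv f s| ^ p * g s) =
        weightedRayleighInf g p L * ∫ s in (-L)..L, |f s| ^ p * g s := by
  obtain ⟨lam, hlam, h, hh⟩ := hg.exists_isHalfEigenfunction hp
  rw [hh.weightedRayleighInf_eq hg heven hp hlam.le]
  exact ⟨hlam, oddPrimitive h, hh.weightedAdmissible_oddPrimitive hg.length_pos heven,
    hh.integral_abs_deriv_oddPrimitive hg heven hp.le⟩

end RayleighQuotient

section ConeWeight

variable {N : ℕ} {d : ℝ}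

lemma even_coneWeight : Function.Even (coneWeight N d) := fun s => by
  rw [coneWeight, coneWeight, abs_neg]

lemma isDecreasingWeight_coneWeight (hd : 0 < d) : IsDecreasingWeight (coneWeight N d) (d / 2) where
  length_pos := half_pos hd
  continuous := by
    unfold coneWeight
    fun_prop
  antitoneOn x hx y hy hxy := by
    rw [coneWeight, coneWeight, abs_of_nonneg hx.1, abs_of_nonneg hy.1]
    gcongr
    exact sub_nonneg.2 hy.2
  pos_of_mem s hs := by
    rw [coneWeight, abs_of_nonneg hs.1]
    exact mul_pos (ENNReal.toReal_pos (Metric.measure_ball_pos volume _ one_pos).ne'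
      measure_ball_lt_top.ne) (pow_pos (sub_pos.2 hs.2) _)

end ConeWeight

end

/-- Lemma A.1, existence. The value `η` of the one-dimensional
weighted problem is strictly positive and the infimum is attained by some admissible
Lipschitz function `f`. -/
theorem eta1D_pos_and_attained {N : ℕ} (hN : 2 ≤ N) (p : ℝ) (hp : 1 < p)
    (d : ℝ) (hd : 0 < d) :
    0 < eta1D N p d ∧
    ∃ f : ℝ → ℝ, Admissible1D N p d f ∧
      (∫ s in (-(d / 2))..(d / 2), |deriv f s| ^ p * coneWeight N d s) =
        eta1D N p d * ∫ s in (-(d / 2))..(d / 2), |f s| ^ p * coneWeight N d s :=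
  eta1D_pos_and_attained_general (isDecreasingWeight_coneWeight hd) even_coneWeight hp
end

section
/- With the one-dimensional weighted problem defined in the context, every Lipschitz minimizer f attaining η satisfies: (i) the weak Euler–Lagrange equation with no Lagrange multiplier, namely ∫_{−d/2}^{d/2} |f'|^{p−2} f' φ' g ds = η ∫_{−d/2}^{d/2} |f|^{p−2} f φ g ds for every Lipschitz function φ on [−d/2, d/2] (so f is a weak solution of −(g|f'|^{p−2}f')' = η g |f|^{p−2} f with Neumann conditions f'(±d/2) = 0); and (ii) f vanishes exactly at the origin: for x ∈ [−d/2, d/2], f(x) = 0 if and only if x = 0. -/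
open MeasureTheory Set Real

/-!
Perturb an extremal `f` to `f + t φ` and restore the constraint by adding a constant, which is
invisible to the gradient. Convexity of `|·|^p` compares the two sides of the Poincaré inequality
to first order in `t`, and the Euler–Lagrange equation results without a multiplier. It integrates
to `|f'|^(p-2) f' g = η ∫ s in x..L, |f s|^(p-2) f s g`, so that an extremal which is nonnegative
on `[c, L]` increases strictly there, unless it vanishes.

If `f c = 0` with `0 ≤ c`, testing with `f (max · c)` shows that `|f|` restricted to `[c, L]` and
extended to an odd function, zero on `[-c, c]`, is again extremal. Being nonnegative on `[0, L]` it
is strictly increasing there, which forces `c = 0` and excludes further zeros.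
-/

namespace WeightedPoincare

open Filter Topology

variable {p a b c L η : ℝ} {f g : ℝ → ℝ}

/-- The derivative `y ↦ |y|^(p-2) y` of `|y|^p / p`. For `p < 2` the value at `0` is still `0`,
although `0 ^ (p - 2)` is a junk value. -/
noncomputable def dualPow (p y : ℝ) : ℝ := |y| ^ (p - 2) * y

lemma dualPow_neg (p y : ℝ) : dualPow p (-y) = -dualPow p y := by simp [dualPow]

lemma dualPow_nonneg_iff {y : ℝ} : 0 ≤ dualPow p y ↔ 0 ≤ y := by
  rcases eq_or_ne y 0 with rfl | hy
  · simp [dualPow]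
  · exact mul_nonneg_iff_of_pos_left (rpow_pos_of_pos (abs_pos.2 hy) _)

lemma dualPow_pos_iff {y : ℝ} : 0 < dualPow p y ↔ 0 < y := by
  rcases eq_or_ne y 0 with rfl | hy
  · simp [dualPow]
  · exact mul_pos_iff_of_pos_left (rpow_pos_of_pos (abs_pos.2 hy) _)

lemma dualPow_eq_zero_iff {y : ℝ} : dualPow p y = 0 ↔ y = 0 := by
  rcases eq_or_ne y 0 with rfl | hy
  · simp [dualPow]
  · simp [dualPow, hy, (rpow_pos_of_pos (abs_pos.2 hy) _).ne']

lemma dualPow_mul (p x y : ℝ) : dualPow p (x * y) = dualPow p x * dualPow p y := by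
  simp only [dualPow, abs_mul, mul_rpow (abs_nonneg x) (abs_nonneg y)]
  ring

lemma dualPow_mul_self (hp : p ≠ 0) (y : ℝ) : dualPow p y * y = |y| ^ p := by
  rcases eq_or_ne y 0 with rfl | hy
  · simp [hp]
  · rw [dualPow, mul_assoc, ← abs_mul_abs_self, ← sq, ← rpow_two, ← rpow_add (abs_pos.2 hy),
      sub_add_cancel]

lemma continuous_dualPow (hp : 1 < p) : Continuous (dualPow p) := by
  have hderiv : dualPow p = fun y => p⁻¹ * deriv (fun x : ℝ => ‖x‖ ^ p) y := by
    ext y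
    rw [(hasDerivAt_norm_rpow y hp).deriv, mul_assoc, inv_mul_cancel_left₀ (by linarith)]
    rfl
  rw [hderiv]
  exact continuous_const.mul ((contDiff_norm_rpow hp).continuous_deriv le_rfl)

lemma convexOn_abs_rpow (hp : 1 ≤ p) : ConvexOn ℝ univ fun y : ℝ => |y| ^ p := by
  have himage : (norm : ℝ → ℝ) '' univ ⊆ Ici 0 := image_subset_iff.2 fun _ _ => norm_nonneg _
  have hconvex : Convex ℝ ((norm : ℝ → ℝ) '' univ) :=
    (isPreconnected_univ.image _ continuous_norm.continuousOn).ordConnected.convex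
  exact ((convexOn_rpow hp).subset himage hconvex).comp convexOn_univ_norm
    ((monotoneOn_rpow_Ici_of_exponent_nonneg (by linarith)).mono himage)

lemma abs_rpow_add_mul_dualPow_le (hp : 1 < p) (x h : ℝ) :
    |x| ^ p + p * (dualPow p x * h) ≤ |x + h| ^ p := by
  have hconv := convexOn_abs_rpow hp.le
  have hderiv := hasDerivAt_abs_rpow x hp
  rcases lt_trichotomy h 0 with hh | rfl | hh
  · have := hconv.slope_le_of_hasDerivAt (mem_univ (x + h)) (mem_univ x) (by linarith) hderiv
    rw [slope_def_field, div_le_iff₀ (by linarith)] at this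
    simp only [dualPow]
    linarith
  · simp
  · have := hconv.le_slope_of_hasDerivAt (mem_univ x) (mem_univ (x + h)) (by linarith) hderiv
    rw [slope_def_field, le_div_iff₀ (by linarith)] at this
    simp only [dualPow]
    linarith

/-- Measurable and bounded on the interval between `a` and `b`: the common regularity of
continuous functions and of derivatives of Lipschitz functions, stable under continuous
operations. -/
structure BoundedMeasurableOn {E : Type*} [NormedAddCommGroup E] [MeasurableSpace E]
    (u : ℝ → E) (a b : ℝ) : Prop where
  measurable : Measurable u
  bounded : ∃ C, ∀ x ∈ uIoc a b, ‖u x‖ ≤ C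

section BoundedMeasurableOn

variable {E F : Type*} [NormedAddCommGroup E] [MeasurableSpace E]
  [NormedAddCommGroup F] [MeasurableSpace F]

lemma boundedMeasurableOn_of_continuous [BorelSpace E] {u : ℝ → E} (hu : Continuous u)
    (a b : ℝ) : BoundedMeasurableOn u a b :=
  ⟨hu.measurable,
    let ⟨C, hC⟩ := isCompact_uIcc.exists_bound_of_continuousOn hu.continuousOn
    ⟨C, fun x hx => hC x (uIoc_subset_uIcc hx)⟩⟩

lemma boundedMeasurableOn_deriv_of_lipschitzWith {K : NNReal} (hf : LipschitzWith K f)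
    (a b : ℝ) : BoundedMeasurableOn (deriv f) a b :=
  ⟨measurable_deriv f, K, fun _ _ => norm_deriv_le_of_lipschitz hf⟩

lemma BoundedMeasurableOn.prodMk {u : ℝ → E} {v : ℝ → F} (hu : BoundedMeasurableOn u a b)
    (hv : BoundedMeasurableOn v a b) : BoundedMeasurableOn (fun x => (u x, v x)) a b := by
  obtain ⟨C, hC⟩ := hu.bounded
  obtain ⟨D, hD⟩ := hv.bounded
  exact ⟨hu.measurable.prodMk hv.measurable, max C D, fun x hx =>
    max_le_max (hC x hx) (hD x hx)⟩

lemma BoundedMeasurableOn.intervalIntegrable {u : ℝ → ℝ} (hu : BoundedMeasurableOn u a b) :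
    IntervalIntegrable u volume a b := by
  obtain ⟨C, hC⟩ := hu.bounded
  rw [intervalIntegrable_iff]
  refine Measure.integrableOn_of_bounded (M := C) (by simp) hu.measurable.aestronglyMeasurable ?_
  filter_upwards [ae_restrict_mem measurableSet_uIoc] with x hx
  exact hC x hx

variable [ProperSpace E] [OpensMeasurableSpace E] {u : ℝ → E}

lemma BoundedMeasurableOn.comp [BorelSpace F] (hu : BoundedMeasurableOn u a b) {Φ : E → F}
    (hΦ : Continuous Φ) : BoundedMeasurableOn (fun x => Φ (u x)) a b := by
  obtain ⟨C, hC⟩ := hu.bounded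
  obtain ⟨B, hB⟩ :=
    (isCompact_closedBall (0 : E) C).exists_bound_of_continuousOn hΦ.continuousOn
  exact ⟨hΦ.measurable.comp hu.measurable, B, fun x hx =>
    hB (u x) (mem_closedBall_zero_iff.2 (hC x hx))⟩

lemma BoundedMeasurableOn.continuous_integral_comp {X : Type*} [TopologicalSpace X]
    [WeaklyLocallyCompactSpace X] [FirstCountableTopology X] (hu : BoundedMeasurableOn u a b)
    {Φ : X × E → ℝ} (hΦ : Continuous Φ) : Continuous fun t => ∫ s in a..b, Φ (t, u s) := by
  obtain ⟨C, hC⟩ := hu.bounded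
  refine continuous_iff_continuousAt.2 fun t₀ => ?_
  obtain ⟨N, hN, hNt₀⟩ := exists_compact_mem_nhds t₀
  obtain ⟨B, hB⟩ := (hN.prod (isCompact_closedBall (0 : E) C)).exists_bound_of_continuousOn
    hΦ.continuousOn
  refine intervalIntegral.continuousAt_of_dominated_interval (bound := fun _ => B) ?_ ?_
    intervalIntegrable_const ?_
  · exact .of_forall fun t => ((hΦ.comp (Continuous.prodMk_right t)).measurable.comp
      hu.measurable).aestronglyMeasurable
  · filter_upwards [hNt₀] with t ht
    exact .of_forall fun s hs => hB (t, u s) ⟨ht, mem_closedBall_zero_iff.2 (hC s hs)⟩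
  · exact .of_forall fun s _ => (hΦ.comp (Continuous.prodMk_left (u s))).continuousAt

end BoundedMeasurableOn

lemma integral_abs_rpow_add_le (hp : 1 < p) (hab : a ≤ b) {u w : ℝ → ℝ}
    (hu : BoundedMeasurableOn u a b) (hw : BoundedMeasurableOn w a b)
    (hg : BoundedMeasurableOn g a b) (hg₀ : ∀ x ∈ Icc a b, 0 ≤ g x) :
    (∫ s in a..b, |u s| ^ p * g s) + p * (∫ s in a..b, dualPow p (u s) * w s * g s) ≤
      ∫ s in a..b, |u s + w s| ^ p * g s := by
  have hdual := continuous_dualPow hp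
  have hp₀ : 0 ≤ p := by linarith
  have huwg := hu.prodMk (hw.prodMk hg)
  have hleft : IntervalIntegrable (fun s => |u s| ^ p * g s) volume a b :=
    (huwg.comp (Φ := fun y => |y.1| ^ p * y.2.2) (by fun_prop)).intervalIntegrable
  have hmiddle : IntervalIntegrable (fun s => dualPow p (u s) * w s * g s) volume a b :=
    (huwg.comp (Φ := fun y => dualPow p y.1 * y.2.1 * y.2.2) (by fun_prop)).intervalIntegrable
  have hright : IntervalIntegrable (fun s => |u s + w s| ^ p * g s) volume a b :=
    (huwg.comp (Φ := fun y => |y.1 + y.2.1| ^ p * y.2.2) (by fun_prop)).intervalIntegrable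
  rw [← intervalIntegral.integral_const_mul,
    ← intervalIntegral.integral_add hleft (hmiddle.const_mul p)]
  refine intervalIntegral.integral_mono_on hab (hleft.add (hmiddle.const_mul p)) hright
    fun s hs => ?_
  have := mul_le_mul_of_nonneg_right (abs_rpow_add_mul_dualPow_le hp (u s) (w s)) (hg₀ s hs)
  linarith

lemma exists_integral_dualPow_add_const_eq_zero (hp : 1 < p) (hab : a ≤ b) (hg : Continuous g)
    (hg₀ : ∀ x ∈ Icc a b, 0 ≤ g x) (hf : Continuous f) :
    ∃ c, ∫ s in a..b, dualPow p (f s + c) * g s = 0 := by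
  have hdual := continuous_dualPow hp
  obtain ⟨B, hB⟩ := (isCompact_Icc (a := a) (b := b)).exists_bound_of_continuousOn hf.continuousOn
  have hB₀ : 0 ≤ B := (norm_nonneg _).trans (hB a (left_mem_Icc.2 hab))
  have hcont : Continuous fun c => ∫ s in a..b, dualPow p (f s + c) * g s :=
    (boundedMeasurableOn_of_continuous (hf.prodMk hg) a b).continuous_integral_comp
      (Φ := fun y => dualPow p (y.2.1 + y.1) * y.2.2) (by fun_prop)
  have hlow : ∫ s in a..b, dualPow p (f s + -B) * g s ≤ 0 := by
    rw [← neg_nonneg, ← intervalIntegral.integral_neg]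
    refine intervalIntegral.integral_nonneg hab fun s hs => ?_
    rw [← neg_mul, ← dualPow_neg]
    exact mul_nonneg (dualPow_nonneg_iff.2 (by linarith [(abs_le.1 (hB s hs)).2])) (hg₀ s hs)
  have hhigh : 0 ≤ ∫ s in a..b, dualPow p (f s + B) * g s :=
    intervalIntegral.integral_nonneg hab fun s hs =>
      mul_nonneg (dualPow_nonneg_iff.2 (by linarith [(abs_le.1 (hB s hs)).1])) (hg₀ s hs)
  obtain ⟨c, -, hc⟩ := intermediate_value_Icc (neg_le_self hB₀) hcont.continuousOn ⟨hlow, hhigh⟩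
  exact ⟨c, hc⟩

lemma ae_deriv_add_const_mul_add_const {φ : ℝ → ℝ} {K K' : NNReal} (hf : LipschitzWith K f)
    (hφ : LipschitzWith K' φ) (t c : ℝ) :
    ∀ᵐ x, deriv (fun s => f s + (t * φ s + c)) x = deriv f x + t * deriv φ x := by
  filter_upwards [hf.ae_differentiableAt_real, hφ.ae_differentiableAt_real] with x hfx hφx
  exact (hfx.hasDerivAt.add ((hφx.hasDerivAt.const_mul t).add_const c)).deriv

/-- `f` is extremal in the weighted Poincaré inequality `η ∫ |h|^p g ≤ ∫ |h'|^p g`, valid for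
Lipschitz `h` with `∫ |h|^(p-2) h g = 0`. The function `f = 0` is allowed, so that a reflection of
a piece of an extremal is extremal even when that piece vanishes. -/
structure IsPoincareExtremal (p a b η : ℝ) (g f : ℝ → ℝ) : Prop where
  const_nonneg : 0 ≤ η
  poincare : ∀ h : ℝ → ℝ, (∃ K : NNReal, LipschitzWith K h) →
    (∫ s in a..b, dualPow p (h s) * g s) = 0 →
    η * (∫ s in a..b, |h s| ^ p * g s) ≤ ∫ s in a..b, |deriv h s| ^ p * g s
  lipschitz : ∃ K : NNReal, LipschitzWith K f
  centered : (∫ s in a..b, dualPow p (f s) * g s) = 0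
  energy_le : (∫ s in a..b, |deriv f s| ^ p * g s) ≤ η * ∫ s in a..b, |f s| ^ p * g s

lemma IsPoincareExtremal.continuous (hf : IsPoincareExtremal p a b η g f) : Continuous f :=
  let ⟨_, hK⟩ := hf.lipschitz
  hK.continuous

section EulerLagrange

variable (hf : IsPoincareExtremal p a b η g f) (hp : 1 < p) (hab : a ≤ b) (hg : Continuous g)
  (hg₀ : ∀ x ∈ Icc a b, 0 ≤ g x)

include hf hp hab hg hg₀

lemma IsPoincareExtremal.integral_abs_rpow_add_mul_le {φ : ℝ → ℝ} (hφ : Continuous φ) (t c : ℝ) :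
    (∫ s in a..b, |f s| ^ p * g s) + p * (t * ∫ s in a..b, dualPow p (f s) * φ s * g s) ≤
      ∫ s in a..b, |f s + (t * φ s + c)| ^ p * g s := by
  have hdual := continuous_dualPow hp
  have hfc := hf.continuous
  have hconvex := integral_abs_rpow_add_le hp hab (boundedMeasurableOn_of_continuous hfc a b)
    (boundedMeasurableOn_of_continuous (u := fun s => t * φ s + c) (by fun_prop) a b)
    (boundedMeasurableOn_of_continuous hg a b) hg₀
  have hsplit : ∀ s, dualPow p (f s) * (t * φ s + c) * g s =
      t * (dualPow p (f s) * φ s * g s) + c * (dualPow p (f s) * g s) := fun s => by ring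
  simp only [hsplit] at hconvex
  rwa [intervalIntegral.integral_add (Continuous.intervalIntegrable (by fun_prop) _ _)
      (Continuous.intervalIntegrable (by fun_prop) _ _), intervalIntegral.integral_const_mul,
    intervalIntegral.integral_const_mul, hf.centered, mul_zero, add_zero] at hconvex

lemma IsPoincareExtremal.mul_integral_le_integral_deriv_add {φ : ℝ → ℝ}
    (hφ : ∃ K : NNReal, LipschitzWith K φ) {t : ℝ} (ht : 0 < t) :
    η * (∫ s in a..b, dualPow p (f s) * φ s * g s) ≤
      ∫ s in a..b, dualPow p (deriv f s + t * deriv φ s) * deriv φ s * g s := by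
  obtain ⟨K, hK⟩ := hf.lipschitz
  obtain ⟨K', hK'⟩ := hφ
  have hfc := hK.continuous
  have hφc := hK'.continuous
  obtain ⟨c, hc⟩ := exists_integral_dualPow_add_const_eq_zero hp hab hg hg₀
    (f := fun s => f s + t * φ s) (by fun_prop)
  simp only [add_assoc] at hc
  have hmass := hf.integral_abs_rpow_add_mul_le hp hab hg hg₀ hφc t c
  have hpoincare := hf.poincare (fun s => f s + (t * φ s + c))
    ⟨_, hK.add (((lipschitzWith_smul t).comp hK').add (LipschitzWith.const c))⟩ hc
  have henergy : (∫ s in a..b, |deriv (fun s => f s + (t * φ s + c)) s| ^ p * g s) =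
      ∫ s in a..b, |deriv f s + t * deriv φ s| ^ p * g s := by
    refine intervalIntegral.integral_congr_ae ?_
    filter_upwards [ae_deriv_add_const_mul_add_const hK hK' t c] with s hs _ using by rw [hs]
  have hderivs := (boundedMeasurableOn_deriv_of_lipschitzWith hK a b).prodMk
    (boundedMeasurableOn_deriv_of_lipschitzWith hK' a b)
  have hconvex := integral_abs_rpow_add_le hp hab
    (hderivs.comp (Φ := fun y => y.1 + t * y.2) (by fun_prop))
    (hderivs.comp (Φ := fun y => -(t * y.2)) (by fun_prop))
    (boundedMeasurableOn_of_continuous hg a b) hg₀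
  have hpull : ∀ s, dualPow p (deriv f s + t * deriv φ s) * -(t * deriv φ s) * g s =
      -t * (dualPow p (deriv f s + t * deriv φ s) * deriv φ s * g s) := fun s => by ring
  simp only [add_neg_cancel_right, hpull, intervalIntegral.integral_const_mul] at hconvex
  have hmass' := mul_le_mul_of_nonneg_left hmass hf.const_nonneg
  refine le_of_mul_le_mul_left ?_ (mul_pos (zero_lt_one.trans hp) ht)
  linarith [hf.energy_le]

lemma IsPoincareExtremal.mul_integral_le_integral_deriv {φ : ℝ → ℝ}
    (hφ : ∃ K : NNReal, LipschitzWith K φ) :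
    η * (∫ s in a..b, dualPow p (f s) * φ s * g s) ≤
      ∫ s in a..b, dualPow p (deriv f s) * deriv φ s * g s := by
  obtain ⟨K, hK⟩ := hf.lipschitz
  obtain ⟨K', hK'⟩ := hφ
  have hdual := continuous_dualPow hp
  have hcont : Continuous fun t : ℝ =>
      ∫ s in a..b, dualPow p (deriv f s + t * deriv φ s) * deriv φ s * g s :=
    ((boundedMeasurableOn_deriv_of_lipschitzWith hK a b).prodMk
      ((boundedMeasurableOn_deriv_of_lipschitzWith hK' a b).prodMk
        (boundedMeasurableOn_of_continuous hg a b))).continuous_integral_comp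
      (Φ := fun y => dualPow p (y.2.1 + y.1 * y.2.2.1) * y.2.2.1 * y.2.2.2) (by fun_prop)
  have hlim := (hcont.tendsto 0).mono_left (nhdsWithin_le_nhds (s := Ioi 0))
  simp only [zero_mul, add_zero] at hlim
  refine ge_of_tendsto hlim ?_
  filter_upwards [self_mem_nhdsWithin] with t ht
  exact hf.mul_integral_le_integral_deriv_add hp hab hg hg₀ ⟨K', hK'⟩ ht

theorem IsPoincareExtremal.eulerLagrange {φ : ℝ → ℝ} (hφ : ∃ K : NNReal, LipschitzWith K φ) :
    (∫ s in a..b, dualPow p (deriv f s) * deriv φ s * g s) =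
      η * ∫ s in a..b, dualPow p (f s) * φ s * g s := by
  obtain ⟨K, hK⟩ := hφ
  refine le_antisymm ?_ (hf.mul_integral_le_integral_deriv hp hab hg hg₀ ⟨K, hK⟩)
  have hneg := hf.mul_integral_le_integral_deriv hp hab hg hg₀ (φ := fun s => -φ s) ⟨K, hK.neg⟩
  simp only [deriv.fun_neg, mul_neg, neg_mul, intervalIntegral.integral_neg] at hneg
  linarith

end EulerLagrange

section IntegrationByParts

variable {k q : ℝ → ℝ}

lemma ae_eq_zero_of_integral_mul_deriv_eq_zero (hab : a ≤ b)
    (hq : IntervalIntegrable q volume a b)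
    (hint : ∀ φ : ℝ → ℝ, (∃ K : NNReal, LipschitzWith K φ) →
      ∫ x in a..b, q x * deriv φ x = 0) :
    ∀ᵐ x, x ∈ Ioo a b → q x = 0 := by
  have hloc : LocallyIntegrableOn q (Ioo a b) :=
    (((intervalIntegrable_iff_integrableOn_Ioc_of_le hab).1 hq).mono_set
      Ioo_subset_Ioc_self).locallyIntegrableOn
  refine isOpen_Ioo.ae_eq_zero_of_integral_contDiff_smul_eq_zero hloc fun χ hχ hsupp hsub => ?_
  have hprim : ∀ x, HasDerivAt (fun y => ∫ t in a..y, χ t) (χ x) x := fun x =>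
    (hχ.continuous.integral_hasStrictDerivAt a x).hasDerivAt
  obtain ⟨C, hC⟩ := hχ.continuous.bounded_above_of_compact_support hsupp
  have hLip : LipschitzWith C.toNNReal fun y => ∫ t in a..y, χ t :=
    lipschitzWith_of_nnnorm_deriv_le (fun x => (hprim x).differentiableAt) fun x => by
      rw [(hprim x).deriv]
      exact NNReal.coe_le_coe.1 ((hC x).trans (Real.le_coe_toNNReal C))
  have htest := hint _ ⟨_, hLip⟩
  simp only [fun x => (hprim x).deriv, intervalIntegral.integral_of_le hab] at htest
  rw [← setIntegral_eq_integral_of_forall_compl_eq_zero (s := Ioc a b), ← htest]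
  · exact integral_congr_ae (.of_forall fun x => mul_comm _ _)
  · intro x hx
    rw [image_eq_zero_of_notMem_tsupport fun h => hx (Ioo_subset_Ioc_self (hsub h)), zero_smul]

lemma hasDerivAt_integral_tail (hk : Continuous k) (x : ℝ) :
    HasDerivAt (fun y => ∫ s in y..b, k s) (-k x) x :=
  intervalIntegral.integral_hasDerivAt_left (hk.intervalIntegrable _ _)
    (hk.stronglyMeasurableAtFilter _ _) hk.continuousAt

lemma integral_tail_mul_deriv_of_lipschitzWith (hk : Continuous k) {φ : ℝ → ℝ} {K : NNReal}
    (hφ : LipschitzWith K φ) :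
    ∫ x in a..b, (∫ s in x..b, k s) * deriv φ x =
      (∫ x in a..b, k x * φ x) - (∫ s in a..b, k s) * φ a := by
  have hderiv : ∀ x, deriv (fun y => ∫ s in y..b, k s) x = -k x := fun x =>
    (hasDerivAt_integral_tail hk x).deriv
  have hcontDiff : ContDiff ℝ 1 fun y => ∫ s in y..b, k s :=
    contDiff_one_iff_deriv.2 ⟨fun x => (hasDerivAt_integral_tail hk x).differentiableAt,
      hk.neg.congr fun x => (hderiv x).symm⟩
  rw [AbsolutelyContinuousOnInterval.integral_mul_deriv_eq_deriv_mul
    hcontDiff.contDiffOn.absolutelyContinuousOnInterval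
    hφ.lipschitzOnWith.absolutelyContinuousOnInterval]
  simp only [hderiv, neg_mul, intervalIntegral.integral_neg,
    intervalIntegral.integral_same, zero_mul]
  ring

end IntegrationByParts

lemma IsPoincareExtremal.ae_flux_eq (hf : IsPoincareExtremal p a b η g f)
    (hp : 1 < p) (hab : a ≤ b) (hg : Continuous g) (hg₀ : ∀ x ∈ Icc a b, 0 ≤ g x) :
    ∀ᵐ x, x ∈ Ioo a b →
      dualPow p (deriv f x) * g x = η * ∫ s in x..b, dualPow p (f s) * g s := by
  obtain ⟨K, hK⟩ := hf.lipschitz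
  have hdual := continuous_dualPow hp
  have hfc := hf.continuous
  have hk : Continuous fun s => dualPow p (f s) * g s := by fun_prop
  have htail : BoundedMeasurableOn (fun x => ∫ s in x..b, dualPow p (f s) * g s) a b :=
    boundedMeasurableOn_of_continuous (continuous_iff_continuousAt.2 fun x =>
      (hasDerivAt_integral_tail hk x).continuousAt) a b
  have hflux : BoundedMeasurableOn (fun x => dualPow p (deriv f x) * g x) a b :=
    ((boundedMeasurableOn_deriv_of_lipschitzWith hK a b).prodMk
      (boundedMeasurableOn_of_continuous hg a b)).comp
      (Φ := fun y => dualPow p y.1 * y.2) (by fun_prop)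
  have hzero := ae_eq_zero_of_integral_mul_deriv_eq_zero hab
    (hflux.intervalIntegrable.sub (htail.intervalIntegrable.const_mul η)) ?_
  · filter_upwards [hzero] with x hx hxI using sub_eq_zero.1 (hx hxI)
  rintro φ ⟨K', hK'⟩
  have hmul : ∀ {u : ℝ → ℝ}, BoundedMeasurableOn u a b →
      IntervalIntegrable (fun x => u x * deriv φ x) volume a b := fun hu =>
    ((hu.prodMk (boundedMeasurableOn_deriv_of_lipschitzWith hK' a b)).comp
      (Φ := fun y => y.1 * y.2) (by fun_prop)).intervalIntegrable
  have hEL := hf.eulerLagrange hp hab hg hg₀ ⟨K', hK'⟩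
  have hparts := integral_tail_mul_deriv_of_lipschitzWith (a := a) (b := b) hk hK'
  simp only [mul_right_comm _ (g _)] at hparts
  simp only [sub_mul, mul_assoc η, mul_right_comm _ (g _) (deriv φ _)]
  rw [hf.centered, zero_mul, sub_zero] at hparts
  rw [intervalIntegral.integral_sub, intervalIntegral.integral_const_mul, hparts, hEL, sub_self]
  · simpa only [mul_right_comm] using hmul hflux
  · exact (hmul htail).const_mul η

lemma nonneg_on_Icc_of_pos_on_Ioo (hab : a < b) (hg : Continuous g)
    (hg₀ : ∀ x ∈ Ioo a b, 0 < g x) : ∀ x ∈ Icc a b, 0 ≤ g x := fun _ hx =>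
  (isClosed_Ici.preimage hg).closure_subset_iff.2 (fun y hy => (hg₀ y hy).le)
    (closure_Ioo hab.ne ▸ hx)

lemma integral_dualPow_mul_pos (hp : 1 < p) (hab : a < b) (hg : Continuous g)
    (hg₀ : ∀ x ∈ Ioo a b, 0 < g x) (hf : Continuous f) (hf₀ : ∀ x ∈ Icc a b, 0 ≤ f x)
    (hne : ∃ x ∈ Icc a b, f x ≠ 0) : 0 < ∫ s in a..b, dualPow p (f s) * g s := by
  obtain ⟨y, hy, hfy⟩ : ∃ y ∈ Ioo a b, f y ≠ 0 := by
    by_contra! hzero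
    obtain ⟨x, hx, hfx⟩ := hne
    exact hfx ((isClosed_singleton.preimage hf).closure_subset_iff.2 hzero
      (closure_Ioo hab.ne ▸ hx))
  have hdual := continuous_dualPow hp
  refine intervalIntegral.integral_pos hab (by fun_prop) (fun x hx => ?_)
    ⟨y, Ioo_subset_Icc_self hy, ?_⟩
  · exact mul_nonneg (dualPow_nonneg_iff.2 (hf₀ x (Ioc_subset_Icc_self hx)))
      (nonneg_on_Icc_of_pos_on_Ioo hab hg hg₀ x (Ioc_subset_Icc_self hx))
  · exact mul_pos (dualPow_pos_iff.2 ((hf₀ y (Ioo_subset_Icc_self hy)).lt_of_ne' hfy)) (hg₀ y hy)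

lemma IsPoincareExtremal.exists_mul_neg (hf : IsPoincareExtremal p a b η g f)
    (hp : 1 < p) (hab : a < b) (hg : Continuous g) (hg₀ : ∀ x ∈ Ioo a b, 0 < g x)
    (hne : ∃ x ∈ Icc a b, f x ≠ 0) : ∃ x ∈ Icc a b, ∃ y ∈ Icc a b, f x * f y < 0 := by
  by_contra! hsign
  obtain ⟨x, hx, hfx⟩ := hne
  have hpos := integral_dualPow_mul_pos hp hab hg hg₀ (f := fun y => f x * f y)
    (continuous_const.mul hf.continuous) (hsign x hx) ⟨x, hx, mul_ne_zero hfx hfx⟩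
  simp only [dualPow_mul, mul_assoc, intervalIntegral.integral_const_mul] at hpos
  exact hpos.ne' (mul_eq_zero_of_right _ hf.centered)

lemma IsPoincareExtremal.const_pos (hf : IsPoincareExtremal p a b η g f)
    (hp : 1 < p) (hab : a < b) (hg : Continuous g) (hg₀ : ∀ x ∈ Ioo a b, 0 < g x)
    (hne : ∃ x ∈ Icc a b, f x ≠ 0) : 0 < η := by
  refine hf.const_nonneg.lt_of_ne' fun hη => ?_
  obtain ⟨K, hK⟩ := hf.lipschitz
  have hderiv : ∀ᵐ x, x ∈ Ioo a b → deriv f x = 0 := by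
    filter_upwards [hf.ae_flux_eq hp hab.le hg (nonneg_on_Icc_of_pos_on_Ioo hab hg hg₀)]
      with x hflux hx
    rw [hη, zero_mul] at hflux
    exact dualPow_eq_zero_iff.1 ((mul_eq_zero_iff_right (hg₀ x hx).ne').1 (hflux hx))
  have hconst : ∀ x ∈ Icc a b, f x = f a := fun x hx => by
    rw [← sub_eq_zero,
      ← (hK.lipschitzOnWith (s := uIcc a x)).absolutelyContinuousOnInterval.integral_deriv_eq_sub,
      intervalIntegral.integral_of_le hx.1, integral_Ioc_eq_integral_Ioo]
    refine setIntegral_eq_zero_of_ae_eq_zero ?_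
    filter_upwards [hderiv] with y hy hyx using hy ⟨hyx.1, hyx.2.trans_le hx.2⟩
  obtain ⟨x, hx, y, hy, hxy⟩ := hf.exists_mul_neg hp hab hg hg₀ hne
  rw [hconst x hx, hconst y hy] at hxy
  exact hxy.not_ge (mul_self_nonneg _)

lemma le_of_ae_deriv_nonneg {K : NNReal} (hf : LipschitzWith K f) (hab : a ≤ b)
    (hderiv : ∀ᵐ x, x ∈ Ioo a b → 0 ≤ deriv f x) : f a ≤ f b := by
  rw [← sub_nonneg,
    ← (hf.lipschitzOnWith (s := uIcc a b)).absolutelyContinuousOnInterval.integral_deriv_eq_sub,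
    intervalIntegral.integral_of_le hab, integral_Ioc_eq_integral_Ioo]
  exact setIntegral_nonneg_of_ae_restrict ((ae_restrict_iff' measurableSet_Ioo).2 hderiv)

lemma strictMonoOn_of_ae_deriv_pos {K : NNReal} (hf : LipschitzWith K f)
    (hderiv : ∀ᵐ x, x ∈ Ioo a b → 0 < deriv f x) : StrictMonoOn f (Icc a b) := by
  intro x hx y hy hxy
  have hIoo : ∀ᵐ t, t ∈ Ioo x y → 0 < deriv f t := by
    filter_upwards [hderiv] with t ht htxy using ht ⟨hx.1.trans_lt htxy.1, htxy.2.trans_le hy.2⟩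
  have hint : IntegrableOn (deriv f) (Ioo x y) :=
    ((boundedMeasurableOn_deriv_of_lipschitzWith hf x y).intervalIntegrable.1).mono_set
      Ioo_subset_Ioc_self
  rw [← sub_pos,
    ← (hf.lipschitzOnWith (s := uIcc x y)).absolutelyContinuousOnInterval.integral_deriv_eq_sub,
    intervalIntegral.integral_of_le hxy.le, integral_Ioc_eq_integral_Ioo,
    setIntegral_pos_iff_support_of_nonneg_ae
      ((ae_restrict_iff' measurableSet_Ioo).2 (hIoo.mono fun t ht h => (ht h).le)) hint,
    measure_congr (t := Ioo x y)]
  · simpa using hxy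
  · exact inter_eventuallyEq_right.2 (hIoo.mono fun t ht h => (ht h).ne')

lemma IsPoincareExtremal.strictMonoOn (hf : IsPoincareExtremal p a b η g f)
    (hp : 1 < p) (hab : a < b) (hg : Continuous g) (hg₀ : ∀ x ∈ Ioo a b, 0 < g x)
    (hc : c ∈ Icc a b) (hf₀ : ∀ x ∈ Icc c b, 0 ≤ f x) (hne : ∃ x ∈ Icc c b, f x ≠ 0) :
    StrictMonoOn f (Icc c b) := by
  obtain ⟨K, hK⟩ := hf.lipschitz
  obtain ⟨z, hz, hfz⟩ := hne
  have hη := hf.const_pos hp hab hg hg₀ ⟨z, ⟨hc.1.trans hz.1, hz.2⟩, hfz⟩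
  have hg₁ := nonneg_on_Icc_of_pos_on_Ioo hab hg hg₀
  have hflux := hf.ae_flux_eq hp hab.le hg hg₁
  have hzb : f z ≤ f b := by
    refine le_of_ae_deriv_nonneg hK hz.2 ?_
    filter_upwards [hflux] with x hx hxI
    have hcx : c ≤ x := hz.1.trans hxI.1.le
    have hxI' : x ∈ Ioo a b := ⟨(hc.1.trans hz.1).trans_lt hxI.1, hxI.2⟩
    have htail : 0 ≤ ∫ s in x..b, dualPow p (f s) * g s :=
      intervalIntegral.integral_nonneg hxI.2.le fun s hs => mul_nonneg
        (dualPow_nonneg_iff.2 (hf₀ s ⟨hcx.trans hs.1, hs.2⟩))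
        (hg₁ s ⟨hxI'.1.le.trans hs.1, hs.2⟩)
    exact dualPow_nonneg_iff.1 (nonneg_of_mul_nonneg_left
      ((hx hxI').symm ▸ mul_nonneg hη.le htail) (hg₀ x hxI'))
  have hfb : f b ≠ 0 := (((hf₀ z hz).lt_of_ne' hfz).trans_le hzb).ne'
  refine strictMonoOn_of_ae_deriv_pos hK ?_
  filter_upwards [hflux] with x hx hxI
  have hxI' : x ∈ Ioo a b := ⟨hc.1.trans_lt hxI.1, hxI.2⟩
  have htail := integral_dualPow_mul_pos hp hxI.2 hg (fun s hs => hg₀ s ⟨hxI'.1.trans hs.1, hs.2⟩)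
    hf.continuous (fun s hs => hf₀ s ⟨hxI.1.le.trans hs.1, hs.2⟩)
    ⟨b, right_mem_Icc.2 hxI.2.le, hfb⟩
  exact dualPow_pos_iff.1 (pos_of_mul_pos_left ((hx hxI').symm ▸ mul_pos hη htail)
    (hg₀ x hxI').le)

lemma deriv_comp_max_of_lt {x : ℝ} (hx : x < c) : deriv (fun y => f (max y c)) x = 0 := by
  have hloc : (fun y => f (max y c)) =ᶠ[𝓝 x] fun _ => f c := by
    filter_upwards [eventually_lt_nhds hx] with y hy using by rw [max_eq_right hy.le]
  rw [hloc.deriv_eq, deriv_const]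

lemma deriv_comp_max_of_gt {x : ℝ} (hx : c < x) :
    deriv (fun y => f (max y c)) x = deriv f x := by
  refine EventuallyEq.deriv_eq ?_
  filter_upwards [eventually_gt_nhds hx] with y hy using by rw [max_eq_left hy.le]

lemma abs_deriv_abs_le {x : ℝ} (hf : ContinuousAt f x) :
    |deriv (fun y => |f y|) x| ≤ |deriv f x| := by
  rcases lt_trichotomy (f x) 0 with hx | hx | hx
  · have hloc : (fun y => |f y|) =ᶠ[𝓝 x] fun y => -f y := by
      filter_upwards [hf.eventually_lt_const hx] with y hy using abs_of_neg hy
    rw [hloc.deriv_eq, deriv.fun_neg, abs_neg]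
  · have hmin : IsLocalMin (fun y => |f y|) x :=
      .of_forall fun y => by simp only [hx, abs_zero, abs_nonneg]
    rw [hmin.deriv_eq_zero, abs_zero]
    exact abs_nonneg _
  · have hloc : (fun y => |f y|) =ᶠ[𝓝 x] f := by
      filter_upwards [hf.eventually_const_lt hx] with y hy using abs_of_pos hy
    rw [hloc.deriv_eq]

lemma IsPoincareExtremal.integral_deriv_comp_max_eq (hf : IsPoincareExtremal p a b η g f)
    (hp : 1 < p) (hab : a ≤ b) (hg : Continuous g) (hg₀ : ∀ x ∈ Icc a b, 0 ≤ g x)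
    (hfc : f c = 0) :
    (∫ s in a..b, |deriv (fun y => f (max y c)) s| ^ p * g s) =
      η * ∫ s in a..b, |f (max s c)| ^ p * g s := by
  obtain ⟨K, hK⟩ := hf.lipschitz
  have hp₀ : p ≠ 0 := by linarith
  have hEL := hf.eulerLagrange hp hab hg hg₀ (φ := fun s => f (max s c))
    ⟨_, hK.comp (LipschitzWith.id.max_const c)⟩
  convert hEL using 1
  · refine intervalIntegral.integral_congr_ae ?_
    filter_upwards [Measure.ae_ne volume c] with s hs _
    rcases hs.lt_or_gt with hs | hs
    · simp only [deriv_comp_max_of_lt hs, abs_zero, zero_rpow hp₀, mul_zero]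
    · rw [deriv_comp_max_of_gt hs, dualPow_mul_self hp₀]
  · congr 1
    refine intervalIntegral.integral_congr fun s _ => ?_
    rcases le_total s c with hs | hs
    · simp only [max_eq_right hs, hfc, abs_zero, zero_rpow hp₀, mul_zero]
    · simp only [max_eq_left hs, dualPow_mul_self hp₀]

lemma IsPoincareExtremal.integral_deriv_abs_comp_max_le (hf : IsPoincareExtremal p a b η g f)
    (hp : 1 < p) (hab : a ≤ b) (hg : Continuous g) (hg₀ : ∀ x ∈ Icc a b, 0 ≤ g x)
    (hfc : f c = 0) :
    (∫ s in a..b, |deriv (fun y => |f (max y c)|) s| ^ p * g s) ≤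
      η * ∫ s in a..b, |(|f (max s c)|)| ^ p * g s := by
  obtain ⟨K, hK⟩ := hf.lipschitz
  have hp₀ : 0 ≤ p := by linarith
  have hmax := hK.comp (LipschitzWith.id.max_const c)
  have hintegrable : ∀ {F : ℝ → ℝ} {K' : NNReal}, LipschitzWith K' F →
      IntervalIntegrable (fun s => |deriv F s| ^ p * g s) volume a b := fun hF =>
    (((boundedMeasurableOn_deriv_of_lipschitzWith hF a b).prodMk
      (boundedMeasurableOn_of_continuous hg a b)).comp
      (Φ := fun y => |y.1| ^ p * y.2) (by fun_prop)).intervalIntegrable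
  simp only [abs_abs]
  rw [← hf.integral_deriv_comp_max_eq hp hab hg hg₀ hfc]
  exact intervalIntegral.integral_mono_on hab (hintegrable (lipschitzWith_one_norm.comp hmax))
    (hintegrable hmax) fun s hs => mul_le_mul_of_nonneg_right
      (rpow_le_rpow (abs_nonneg _) (abs_deriv_abs_le hmax.continuous.continuousAt) hp₀) (hg₀ s hs)

lemma integral_eq_two_mul_of_ae_eq_add_comp_neg {u v : ℝ → ℝ}
    (hu : IntervalIntegrable u volume (-L) L) (hv : ∀ᵐ x, v x = u x + u (-x)) :
    ∫ x in -L..L, v x = 2 * ∫ x in -L..L, u x := by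
  have hu' : IntervalIntegrable (fun x => u (-x)) volume (-L) L := by
    simpa only [neg_neg] using ((IntervalIntegrable.iff_comp_neg (f := u)).1 hu).symm
  rw [intervalIntegral.integral_congr_ae (hv.mono fun _ hx _ => hx),
    intervalIntegral.integral_add hu hu', intervalIntegral.integral_comp_neg, neg_neg, two_mul]

section OddReflection

variable {F : ℝ → ℝ} {x : ℝ}

/-- The odd extension of the restriction to `[0, ∞)` of a function `F` that vanishes on
`(-∞, 0]`. -/
def oddReflection (F : ℝ → ℝ) (x : ℝ) : ℝ := F x - F (-x)

lemma oddReflection_neg (F : ℝ → ℝ) (x : ℝ) : oddReflection F (-x) = -oddReflection F x := by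
  simp only [oddReflection, neg_neg, neg_sub]

lemma oddReflection_of_nonneg (hF : ∀ x ≤ 0, F x = 0) (hx : 0 ≤ x) : oddReflection F x = F x := by
  rw [oddReflection, hF (-x) (neg_nonpos.2 hx), sub_zero]

lemma deriv_eq_zero_of_neg (hF : ∀ x ≤ 0, F x = 0) (hx : x < 0) : deriv F x = 0 := by
  have hloc : F =ᶠ[𝓝 x] fun _ => 0 := by
    filter_upwards [eventually_lt_nhds hx] with y hy using hF y hy.le
  rw [hloc.deriv_eq, deriv_const]

lemma abs_oddReflection_rpow (hp : p ≠ 0) (hF : ∀ x ≤ 0, F x = 0) (x : ℝ) :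
    |oddReflection F x| ^ p = |F x| ^ p + |F (-x)| ^ p := by
  rcases le_total 0 x with hx | hx
  · simp [oddReflection, hF (-x) (by linarith), hp]
  · simp [oddReflection, hF x hx, hp]

lemma abs_deriv_oddReflection_rpow (hp : p ≠ 0) (hF : ∀ x ≤ 0, F x = 0) (hx : x ≠ 0) :
    |deriv (oddReflection F) x| ^ p = |deriv F x| ^ p + |deriv F (-x)| ^ p := by
  rcases hx.lt_or_gt with hx | hx
  · have hloc : oddReflection F =ᶠ[𝓝 x] fun y => -F (-y) := by
      filter_upwards [eventually_lt_nhds hx] with y hy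
      rw [oddReflection, hF y hy.le, zero_sub]
    rw [hloc.deriv_eq, deriv.fun_neg, deriv_comp_neg, neg_neg, deriv_eq_zero_of_neg hF hx]
    simp [hp]
  · have hloc : oddReflection F =ᶠ[𝓝 x] F := by
      filter_upwards [eventually_gt_nhds hx] with y hy using oddReflection_of_nonneg hF hy.le
    rw [hloc.deriv_eq, deriv_eq_zero_of_neg hF (neg_lt_zero.2 hx)]
    simp [hp]

end OddReflection

lemma IsPoincareExtremal.oddReflection_of_energy_le
    (hf : IsPoincareExtremal p (-L) L η g f) (hp : 1 < p) (hg : Continuous g)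
    (heven : Function.Even g) {F : ℝ → ℝ} (hLip : ∃ K : NNReal, LipschitzWith K F)
    (hF : ∀ x ≤ 0, F x = 0)
    (henergy : (∫ s in -L..L, |deriv F s| ^ p * g s) ≤ η * ∫ s in -L..L, |F s| ^ p * g s) :
    IsPoincareExtremal p (-L) L η g (oddReflection F) := by
  obtain ⟨K, hK⟩ := hLip
  have hp₀ : 0 ≤ p := by linarith
  have hdouble : ∀ {u v : ℝ → ℝ}, BoundedMeasurableOn u (-L) L →
      (∀ᵐ x, |v x| ^ p = |u x| ^ p + |u (-x)| ^ p) →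
      (∫ s in -L..L, |v s| ^ p * g s) = 2 * ∫ s in -L..L, |u s| ^ p * g s := fun hu hv =>
    integral_eq_two_mul_of_ae_eq_add_comp_neg
      ((hu.prodMk (boundedMeasurableOn_of_continuous hg _ _)).comp
        (Φ := fun y => |y.1| ^ p * y.2) (by fun_prop)).intervalIntegrable
      (hv.mono fun x hx => by rw [hx, add_mul, heven])
  refine { hf with
    lipschitz := ⟨_, hK.sub (hK.comp LipschitzWith.id.neg)⟩
    centered := ?_
    energy_le := ?_ }
  · have hreflect := intervalIntegral.integral_comp_neg (a := -L) (b := L)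
      fun s => dualPow p (oddReflection F s) * g s
    simp only [oddReflection_neg, dualPow_neg, heven _, neg_neg, neg_mul,
      intervalIntegral.integral_neg] at hreflect
    linarith
  · rw [hdouble (boundedMeasurableOn_deriv_of_lipschitzWith hK _ _)
        ((Measure.ae_ne volume 0).mono fun x => abs_deriv_oddReflection_rpow (by linarith) hF),
      hdouble (boundedMeasurableOn_of_continuous hK.continuous _ _)
        (.of_forall (abs_oddReflection_rpow (by linarith) hF))]
    linarith

lemma IsPoincareExtremal.comp_neg (hf : IsPoincareExtremal p (-L) L η g f)
    (heven : Function.Even g) : IsPoincareExtremal p (-L) L η g fun x => f (-x) := by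
  have hreflect : ∀ {H : ℝ → ℝ},
      ∫ s in -L..L, H (-s) * g s = ∫ s in -L..L, H s * g s := by
    intro H
    simpa only [heven _, neg_neg] using
      intervalIntegral.integral_comp_neg (a := -L) (b := L) fun s => H s * g s
  refine { hf with
    lipschitz := let ⟨_, hK⟩ := hf.lipschitz; ⟨_, hK.comp LipschitzWith.id.neg⟩
    centered := (hreflect (H := fun s => dualPow p (f s))).trans hf.centered
    energy_le := ?_ }
  simp only [deriv_comp_neg, abs_neg]
  rw [hreflect (H := fun s => |deriv f s| ^ p), hreflect (H := fun s => |f s| ^ p)]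
  exact hf.energy_le

lemma exists_mem_uIcc_eq_zero_of_mul_neg (hf : Continuous f) (hab : f a * f b < 0) :
    ∃ x ∈ uIcc a b, f x = 0 := by
  refine intermediate_value_uIcc hf.continuousOn ?_
  rcases mul_neg_iff.1 hab with ⟨ha, hb⟩ | ⟨ha, hb⟩
  · exact ⟨min_le_of_right_le hb.le, le_max_of_le_left ha.le⟩
  · exact ⟨min_le_of_left_le ha.le, le_max_of_le_right hb.le⟩

section EvenWeight

variable {x : ℝ} (hf : IsPoincareExtremal p (-L) L η g f) (hp : 1 < p) (hL : 0 < L)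
  (hg : Continuous g) (heven : Function.Even g) (hg₀ : ∀ x ∈ Ioo (-L) L, 0 < g x)

include hf hp hL hg heven hg₀

lemma IsPoincareExtremal.eq_zero_and_forall_ne_zero_of_apply_eq_zero (hc : c ∈ Icc 0 L)
    (hfc : f c = 0) (hne : ∃ x ∈ Icc c L, f x ≠ 0) : c = 0 ∧ ∀ x ∈ Ioc 0 L, f x ≠ 0 := by
  have hab : -L < L := by linarith
  obtain ⟨z, hz, hfz⟩ := hne
  set F : ℝ → ℝ := fun y => |f (max y c)|
  have hF : ∀ x ≤ c, F x = 0 := fun x hx => by simp only [F, max_eq_right hx, hfc, abs_zero]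
  have hF' : ∀ x ≤ 0, F x = 0 := fun x hx => hF x (hx.trans hc.1)
  have hFabs : ∀ {x}, c ≤ x → F x = |f x| := fun hx => by simp only [F, max_eq_left hx]
  have hLip : ∃ K : NNReal, LipschitzWith K F :=
    let ⟨_, hK⟩ := hf.lipschitz
    ⟨_, lipschitzWith_one_norm.comp (hK.comp (LipschitzWith.id.max_const c))⟩
  have hv := hf.oddReflection_of_energy_le hp hg heven hLip hF'
    (hf.integral_deriv_abs_comp_max_le hp hab.le hg (nonneg_on_Icc_of_pos_on_Ioo hab hg hg₀) hfc)
  have hvF : ∀ {x}, 0 ≤ x → oddReflection F x = F x := oddReflection_of_nonneg hF'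
  have hmono : StrictMonoOn (oddReflection F) (Icc 0 L) :=
    hv.strictMonoOn hp hab hg hg₀ (by constructor <;> linarith)
      (fun x hx => by rw [hvF hx.1]; exact abs_nonneg _)
      ⟨z, ⟨hc.1.trans hz.1, hz.2⟩, by
        rwa [hvF (hc.1.trans hz.1), hFabs hz.1, abs_ne_zero]⟩
  have hpos : ∀ x ∈ Ioc 0 L, 0 < F x := fun x hx => by
    have := hmono (left_mem_Icc.2 hL.le) (Ioc_subset_Icc_self hx) hx.1
    rwa [hvF le_rfl, hvF hx.1.le, hF' 0 le_rfl] at this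
  obtain rfl : 0 = c := hc.1.eq_of_not_lt fun h => (hpos c ⟨h, hc.2⟩).ne' (hF c le_rfl)
  exact ⟨rfl, fun x hx => abs_pos.1 (hFabs hx.1.le ▸ hpos x hx)⟩

lemma IsPoincareExtremal.mul_apply_zero_nonneg (hx : x ∈ Icc 0 L) : 0 ≤ f 0 * f x := by
  by_contra! hneg
  obtain ⟨c, hc, hfc⟩ := exists_mem_uIcc_eq_zero_of_mul_neg hf.continuous hneg
  rw [uIcc_of_le hx.1] at hc
  obtain ⟨rfl, -⟩ := hf.eq_zero_and_forall_ne_zero_of_apply_eq_zero hp hL hg heven hg₀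
    ⟨hc.1, hc.2.trans hx.2⟩ hfc ⟨x, ⟨hc.2, hx.2⟩, right_ne_zero_of_mul hneg.ne⟩
  exact left_ne_zero_of_mul hneg.ne hfc

lemma IsPoincareExtremal.apply_zero (hne : ∃ x ∈ Icc (-L) L, f x ≠ 0) : f 0 = 0 := by
  have hsign : ∀ x ∈ Icc (-L) L, 0 ≤ f 0 * f x := fun x hx => by
    rcases le_total 0 x with h | h
    · exact hf.mul_apply_zero_nonneg hp hL hg heven hg₀ ⟨h, hx.2⟩
    · simpa only [neg_neg, neg_zero] using (hf.comp_neg heven).mul_apply_zero_nonneg hp hL hg heven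
        hg₀ (x := -x) ⟨neg_nonneg.2 h, neg_le.1 hx.1⟩
  obtain ⟨x, hx, y, hy, hxy⟩ := hf.exists_mul_neg hp (by linarith) hg hg₀ hne
  by_contra hf0
  nlinarith [mul_nonneg (hsign x hx) (hsign y hy), mul_self_pos.2 hf0]

lemma IsPoincareExtremal.ne_zero_of_pos (hne : ∃ x ∈ Icc (-L) L, f x ≠ 0)
    (hx : x ∈ Ioc 0 L) : f x ≠ 0 := by
  have h0 : f 0 = 0 := hf.apply_zero hp hL hg heven hg₀ hne
  have h0L : (0 : ℝ) ∈ Icc 0 L := left_mem_Icc.2 hL.le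
  intro hfx
  have hright : ∀ y ∈ Icc 0 L, f y = 0 := by
    by_contra! hright
    exact (hf.eq_zero_and_forall_ne_zero_of_apply_eq_zero hp hL hg heven hg₀ h0L h0 hright).2
      x hx hfx
  obtain ⟨y, hy, z, hz, hyz⟩ := hf.exists_mul_neg hp (by linarith) hg hg₀ hne
  have hleft : ∀ {t}, t ∈ Icc (-L) L → f t ≠ 0 → t < 0 := fun ht hft =>
    lt_of_not_ge fun h => hft (hright _ ⟨h, ht.2⟩)
  have hy0 := hleft hy (left_ne_zero_of_mul hyz.ne)
  have hz0 := hleft hz (right_ne_zero_of_mul hyz.ne)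
  obtain ⟨t, ht, hft⟩ := exists_mem_uIcc_eq_zero_of_mul_neg hf.continuous hyz
  have hnoZero := ((hf.comp_neg heven).eq_zero_and_forall_ne_zero_of_apply_eq_zero hp hL hg
    heven hg₀ h0L (by simpa only [neg_zero] using h0) ⟨-y, ⟨by linarith, by linarith [hy.1]⟩, by
      simpa only [neg_neg] using left_ne_zero_of_mul hyz.ne⟩).2
  refine hnoZero (-t) ⟨?_, ?_⟩ (by rwa [neg_neg])
  · linarith [ht.2, max_lt hy0 hz0]
  · linarith [ht.1, le_min hy.1 hz.1]

theorem IsPoincareExtremal.apply_eq_zero_iff (hne : ∃ x ∈ Icc (-L) L, f x ≠ 0)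
    (hx : x ∈ Icc (-L) L) : f x = 0 ↔ x = 0 := by
  refine ⟨fun hfx => ?_, fun h => h ▸ hf.apply_zero hp hL hg heven hg₀ hne⟩
  have hne' : ∃ x ∈ Icc (-L) L, f (-x) ≠ 0 :=
    let ⟨y, hy, hfy⟩ := hne
    ⟨-y, ⟨neg_le_neg hy.2, neg_le.1 hy.1⟩, by rwa [neg_neg]⟩
  rcases lt_trichotomy x 0 with h | h | h
  · exact absurd (by rwa [neg_neg]) ((hf.comp_neg heven).ne_zero_of_pos hp hL hg heven hg₀ hne'
      (x := -x) ⟨neg_pos.2 h, neg_le.1 hx.1⟩)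
  · exact h
  · exact absurd hfx (hf.ne_zero_of_pos hp hL hg heven hg₀ hne ⟨h, hx.2⟩)

end EvenWeight

section ConeWeight

variable {N : ℕ} {d : ℝ} {h : ℝ → ℝ}

lemma continuous_coneWeight (N : ℕ) (d : ℝ) : Continuous (coneWeight N d) := by
  unfold coneWeight
  fun_prop

lemma even_coneWeight (N : ℕ) (d : ℝ) : Function.Even (coneWeight N d) := fun s => by
  simp only [coneWeight, abs_neg]

lemma coneWeight_pos (N : ℕ) {s : ℝ} (hs : s ∈ Ioo (-(d / 2)) (d / 2)) :
    0 < coneWeight N d s := by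
  have hball : 0 < (volume (Metric.ball (0 : EuclideanSpace ℝ (Fin (N - 1))) 1)).toReal :=
    ENNReal.toReal_pos (Metric.measure_ball_pos volume _ one_pos).ne' measure_ball_lt_top.ne
  exact mul_pos hball (pow_pos (sub_pos.2 (abs_lt.2 hs)) _)

lemma integral_abs_rpow_mul_coneWeight_nonneg (N : ℕ) (hd : 0 < d) (p : ℝ) (h : ℝ → ℝ) :
    0 ≤ ∫ s in -(d / 2)..d / 2, |h s| ^ p * coneWeight N d s :=
  intervalIntegral.integral_nonneg (by linarith) fun s hs =>
    mul_nonneg (rpow_nonneg (abs_nonneg _) _) (nonneg_on_Icc_of_pos_on_Ioo (by linarith)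
      (continuous_coneWeight N d) (fun _ => coneWeight_pos N) s hs)

lemma eta1D_nonneg (N : ℕ) (p : ℝ) (hd : 0 < d) : 0 ≤ eta1D N p d := by
  refine Real.sInf_nonneg ?_
  rintro _ ⟨h, -, rfl⟩
  exact div_nonneg (integral_abs_rpow_mul_coneWeight_nonneg N hd p _)
    (integral_abs_rpow_mul_coneWeight_nonneg N hd p _)

lemma eta1D_mul_integral_le (hp : p ≠ 0) (hd : 0 < d) (hLip : ∃ K : NNReal, LipschitzWith K h)
    (hcentered : ∫ s in -(d / 2)..d / 2, dualPow p (h s) * coneWeight N d s = 0) :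
    eta1D N p d * (∫ s in -(d / 2)..d / 2, |h s| ^ p * coneWeight N d s) ≤
      ∫ s in -(d / 2)..d / 2, |deriv h s| ^ p * coneWeight N d s := by
  have hnonneg := integral_abs_rpow_mul_coneWeight_nonneg N hd p
  rcases (hnonneg h).eq_or_lt with hzero | hpos
  · rw [← hzero, mul_zero]
    exact hnonneg _
  have hne : ∃ x ∈ Icc (-(d / 2)) (d / 2), h x ≠ 0 := by
    by_contra! hh
    refine hpos.ne' (intervalIntegral.integral_zero_ae (.of_forall fun s hs => ?_))
    rw [uIoc_of_le (by linarith)] at hs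
    rw [hh s (Ioc_subset_Icc_self hs), abs_zero, zero_rpow hp, zero_mul]
  refine (le_div_iff₀ hpos).1 (csInf_le ⟨0, ?_⟩ ⟨h, ⟨hLip, hne, hcentered⟩, rfl⟩)
  rintro _ ⟨h, -, rfl⟩
  exact div_nonneg (hnonneg _) (hnonneg _)

lemma isPoincareExtremal_of_admissible1D (hp : p ≠ 0) (hd : 0 < d) (hf : Admissible1D N p d f)
    (hmin : (∫ s in -(d / 2)..d / 2, |deriv f s| ^ p * coneWeight N d s) =
      eta1D N p d * ∫ s in -(d / 2)..d / 2, |f s| ^ p * coneWeight N d s) :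
    IsPoincareExtremal p (-(d / 2)) (d / 2) (eta1D N p d) (coneWeight N d) f where
  const_nonneg := eta1D_nonneg N p hd
  poincare _ := eta1D_mul_integral_le hp hd
  lipschitz := hf.1
  centered := hf.2.2
  energy_le := hmin.le

end ConeWeight

end WeightedPoincare

open WeightedPoincare in
theorem eta1D_minimizer_properties_general {p L η : ℝ} {f g : ℝ → ℝ} (hp : 1 < p) (hL : 0 < L)
    (hg : Continuous g) (heven : Function.Even g) (hg₀ : ∀ x ∈ Ioo (-L) L, 0 < g x)
    (hf : IsPoincareExtremal p (-L) L η g f) (hne : ∃ x ∈ Icc (-L) L, f x ≠ 0) :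
    (∀ φ : ℝ → ℝ, (∃ K : NNReal, LipschitzWith K φ) →
      (∫ s in -L..L, dualPow p (deriv f s) * deriv φ s * g s) =
        η * ∫ s in -L..L, dualPow p (f s) * φ s * g s) ∧
    (∀ x ∈ Icc (-L) L, f x = 0 ↔ x = 0) :=
  have hab : -L < L := by linarith
  ⟨fun _ => hf.eulerLagrange hp hab.le hg (nonneg_on_Icc_of_pos_on_Ioo hab hg hg₀),
    fun _ => hf.apply_eq_zero_iff hp hL hg heven hg₀ hne⟩

/-- Lemma A.1, properties of minimizers. Every Lipschitz minimizer
`f` attaining `η` satisfies the multiplier-free weak Euler–Lagrange equation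
`∫ |f'|^(p-2) f' φ' g = η ∫ |f|^(p-2) f φ g` for every Lipschitz test function `φ`
(i.e. `f` weakly solves `-(g |f'|^(p-2) f')' = η g |f|^(p-2) f` with Neumann boundary
conditions), and `f` vanishes exactly at the origin. -/
theorem eta1D_minimizer_properties {N : ℕ} (hN : 2 ≤ N) (p : ℝ) (hp : 1 < p)
    (d : ℝ) (hd : 0 < d) (f : ℝ → ℝ) (hf : Admissible1D N p d f)
    (hmin : (∫ s in (-(d / 2))..(d / 2), |deriv f s| ^ p * coneWeight N d s) =
      eta1D N p d * ∫ s in (-(d / 2))..(d / 2), |f s| ^ p * coneWeight N d s) :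
    (∀ φ : ℝ → ℝ, (∃ K : NNReal, LipschitzWith K φ) →
      (∫ s in (-(d / 2))..(d / 2),
          |deriv f s| ^ (p - 2) * deriv f s * deriv φ s * coneWeight N d s) =
        eta1D N p d * ∫ s in (-(d / 2))..(d / 2),
          |f s| ^ (p - 2) * f s * φ s * coneWeight N d s) ∧
    (∀ x ∈ Icc (-(d / 2)) (d / 2), f x = 0 ↔ x = 0) := by
  open WeightedPoincare in
  exact eta1D_minimizer_properties_general hp (half_pos hd) (continuous_coneWeight N d)
    (even_coneWeight N d) (fun _ => coneWeight_pos N)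
    (isPoincareExtremal_of_admissible1D (by linarith) hd hf hmin) hf.2.1
end
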